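/- arXiv:2402.16195 — 6 statements merged into one kernel-verified Lean document; each statement's English description precedes it below -/
import Mathlib

section
/- Let E and F be real inner product spaces, let u, w ∈ E be orthonormal vectors (‖u‖ = ‖w‖ = 1 and ⟨u,w⟩ = 0), and let s : E → E → F be a symmetric bilinear map such that ‖s(v,v)‖ ≤ 1 for every unit vector v of the form v = a•u + b•w with a² + b² = 1. Then −2 ≤ ⟨s(u,u), s(w,w)⟩ − ‖s(u,w)‖² ≤ 1. -/
open scoped RealInnerProductSpace

/-!
Write `A = s(u,u)`, `B = s(w,w)`, `C = s(u,w)`. The bound at `u` and `w` gives `‖A‖, ‖B‖ ≤ 1`, so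
the upper estimate is Cauchy–Schwarz. For the lower one, the diagonal unit vectors `(u ± w)/√2`
give `‖(A + B)/2 ± C‖ ≤ 1`, and the parallelogram law yields `‖A + B‖²/4 + ‖C‖² ≤ 1`. Combined with
`2⟪A, B⟫ = ‖A + B‖² - ‖A‖² - ‖B‖² ≥ ‖A + B‖² - 2`, this gives
`⟪A, B⟫ - ‖C‖² ≥ (3/4)‖A + B‖² - 2 ≥ -2`.
-/

/-- If `s` is a symmetric bilinear map on a real inner product space with
`‖s(v,v)‖ ≤ 1` for every unit vector `v` in the plane spanned by the orthonormal pair `u, w`,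
then the "sectional curvature" quantity `⟪s(u,u), s(w,w)⟫ − ‖s(u,w)‖²` lies in `[-2, 1]`. -/
theorem stmt_0 {E F : Type*} [NormedAddCommGroup E] [InnerProductSpace ℝ E]
    [NormedAddCommGroup F] [InnerProductSpace ℝ F]
    (u w : E) (hu : ‖u‖ = 1) (hw : ‖w‖ = 1) (huw : ⟪u, w⟫ = 0)
    (s : E →ₗ[ℝ] E →ₗ[ℝ] F) (hsymm : ∀ x y : E, s x y = s y x)
    (hbound : ∀ a b : ℝ, a ^ 2 + b ^ 2 = 1 → ‖s (a • u + b • w) (a • u + b • w)‖ ≤ 1) :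
    -2 ≤ ⟪s u u, s w w⟫ - ‖s u w‖ ^ 2 ∧ ⟪s u u, s w w⟫ - ‖s u w‖ ^ 2 ≤ 1 := by
  have hA : ‖s u u‖ ≤ 1 := by simpa using hbound 1 0 (by norm_num)
  have hB : ‖s w w‖ ≤ 1 := by simpa using hbound 0 1 (by norm_num)
  have hexp (a b : ℝ) : s (a • u + b • w) (a • u + b • w)
      = a ^ 2 • s u u + (2 * (a * b)) • s u w + b ^ 2 • s w w := by
    simp only [map_add, map_smul, LinearMap.add_apply, LinearMap.smul_apply, hsymm w u]
    module
  have hr : √(1 / 2 : ℝ) ^ 2 = 1 / 2 := Real.sq_sqrt (by norm_num)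
  have hP : ‖(1 / 2 : ℝ) • (s u u + s w w) + s u w‖ ≤ 1 := by
    have h := hbound √(1 / 2) √(1 / 2) (by rw [hr]; norm_num)
    rw [hexp, ← sq √(1 / 2 : ℝ), hr] at h
    convert h using 2
    module
  have hM : ‖(1 / 2 : ℝ) • (s u u + s w w) - s u w‖ ≤ 1 := by
    have h := hbound √(1 / 2) (-√(1 / 2)) (by rw [neg_sq, hr]; norm_num)
    rw [hexp, neg_sq, mul_neg, ← sq √(1 / 2 : ℝ), hr] at h
    convert h using 2
    module
  have hpar := parallelogram_law_with_norm ℝ ((1 / 2 : ℝ) • (s u u + s w w)) (s u w)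
  have hhalf : ‖(1 / 2 : ℝ) • (s u u + s w w)‖ = 1 / 2 * ‖s u u + s w w‖ := by
    rw [norm_smul]; norm_num
  rw [hhalf] at hpar
  have hsum := norm_add_sq_real (s u u) (s w w)
  have hcs := real_inner_le_norm (s u u) (s w w)
  have hAB := mul_le_one₀ hA (norm_nonneg (s w w)) hB
  have hA2 := pow_le_one₀ (n := 2) (norm_nonneg _) hA
  have hB2 := pow_le_one₀ (n := 2) (norm_nonneg _) hB
  have hP2 := pow_le_one₀ (n := 2) (norm_nonneg _) hP
  have hM2 := pow_le_one₀ (n := 2) (norm_nonneg _) hM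
  constructor
  · linarith [sq_nonneg ‖s u u + s w w‖]
  · linarith [sq_nonneg ‖s u w‖]
end

section
/- Let E be a real inner product space, F a complete real inner product space, u, w ∈ E orthonormal vectors, and s : E → E → F a symmetric bilinear map. For θ ∈ ℝ set u_θ = (cos θ)•u + (sin θ)•w. Define h = (1/(2π)) • ∫_0^{2π} s(u_θ, u_θ) dθ ∈ F and ẑ = (1/(2π)) · ∫_0^{2π} ‖s(u_θ, u_θ)‖² dθ ∈ ℝ. Then ⟨s(u,u), s(w,w)⟩ − ‖s(u,w)‖² = 3·‖h‖² − 2·ẑ. -/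
/-!
With `H = (s(u,u) + s(w,w)) / 2`, `D = (s(u,u) - s(w,w)) / 2` and `C = s(u,w)`, the double angle
formulas give `s(u_θ, u_θ) = H + cos 2θ • D + sin 2θ • C`. By orthogonality of the trigonometric
functions over a full period, `h = H` (`integral_ellipse`) and `ẑ = ‖H‖² + (‖D‖² + ‖C‖²) / 2`
(`integral_norm_sq_ellipse`), so that `3‖h‖² - 2ẑ = ‖H‖² - ‖D‖² - ‖C‖²`. Polarization,
`‖H‖² - ‖D‖² = ⟪s(u,u), s(w,w)⟫`, finishes the argument. Both integrals are evaluated with explicit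
antiderivatives.
-/

open scoped RealInnerProductSpace
open Real MeasureTheory

theorem hasDerivAt_sin_two_mul (θ : ℝ) :
    HasDerivAt (fun θ : ℝ => Real.sin (2 * θ)) (2 * Real.cos (2 * θ)) θ := by
  simpa [mul_comm] using ((hasDerivAt_id θ).const_mul 2).sin

theorem hasDerivAt_cos_two_mul (θ : ℝ) :
    HasDerivAt (fun θ : ℝ => Real.cos (2 * θ)) (-(2 * Real.sin (2 * θ))) θ := by
  simpa [mul_comm] using ((hasDerivAt_id θ).const_mul 2).cos

theorem sin_two_mul_two_pi : Real.sin (2 * (2 * π)) = 0 := by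
  simpa using Real.sin_nat_mul_two_pi_sub 0 2

theorem cos_two_mul_two_pi : Real.cos (2 * (2 * π)) = 1 := by
  simpa using Real.cos_nat_mul_two_pi 2

/-- Over a full period the oscillating terms integrate to zero: the mean is the centre `H`. -/
theorem integral_ellipse {F : Type*} [NormedAddCommGroup F] [InnerProductSpace ℝ F]
    [CompleteSpace F] (H D C : F) :
    ∫ θ in (0:ℝ)..(2 * π), (H + Real.cos (2 * θ) • D + Real.sin (2 * θ) • C) = (2 * π) • H := by
  have key : ∀ θ ∈ Set.uIcc (0:ℝ) (2 * π), HasDerivAt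
      (fun θ : ℝ => θ • H + (Real.sin (2 * θ) / 2) • D + (-Real.cos (2 * θ) / 2) • C)
      (H + Real.cos (2 * θ) • D + Real.sin (2 * θ) • C) θ := by
    intro θ _
    have h1 := (hasDerivAt_id θ).smul_const H
    have h2 := ((hasDerivAt_sin_two_mul θ).div_const 2).smul_const D
    have h3 := ((hasDerivAt_cos_two_mul θ).neg.div_const 2).smul_const C
    refine ((h1.add h2).add h3).congr_deriv ?_
    module
  rw [intervalIntegral.integral_eq_sub_of_hasDerivAt key
    (Continuous.intervalIntegrable (by fun_prop) _ _)]
  simp only [sin_two_mul_two_pi, cos_two_mul_two_pi, mul_zero, Real.sin_zero, Real.cos_zero]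
  module

/-- Only the squares `cos²` and `sin²`, each of mean `1 / 2`, survive next to the constant term. -/
theorem integral_norm_sq_ellipse {F : Type*} [NormedAddCommGroup F]
    [InnerProductSpace ℝ F] (H D C : F) :
    ∫ θ in (0:ℝ)..(2 * π), ‖H + Real.cos (2 * θ) • D + Real.sin (2 * θ) • C‖ ^ 2 =
      2 * π * (‖H‖ ^ 2 + (‖D‖ ^ 2 + ‖C‖ ^ 2) / 2) := by
  have key : ∀ θ ∈ Set.uIcc (0:ℝ) (2 * π), HasDerivAt
      (fun θ : ℝ => θ * (‖H‖ ^ 2 + (‖D‖ ^ 2 + ‖C‖ ^ 2) / 2)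
        + Real.sin (2 * θ) * Real.cos (2 * θ) * ((‖D‖ ^ 2 - ‖C‖ ^ 2) / 4)
        + Real.sin (2 * θ) * ⟪H, D⟫ - Real.cos (2 * θ) * ⟪H, C⟫
        + Real.sin (2 * θ) * Real.sin (2 * θ) * (⟪D, C⟫ / 2))
      (‖H + Real.cos (2 * θ) • D + Real.sin (2 * θ) • C‖ ^ 2) θ := by
    intro θ _
    have hs := hasDerivAt_sin_two_mul θ
    have hc := hasDerivAt_cos_two_mul θ
    refine ((((((hasDerivAt_id θ).mul_const _).add ((hs.mul hc).mul_const _)).add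
      (hs.mul_const _)).sub (hc.mul_const _)).add ((hs.mul hs).mul_const _)).congr_deriv ?_
    have e : ‖H + Real.cos (2 * θ) • D + Real.sin (2 * θ) • C‖ ^ 2 =
        ‖H‖ ^ 2 + Real.cos (2 * θ) ^ 2 * ‖D‖ ^ 2 + Real.sin (2 * θ) ^ 2 * ‖C‖ ^ 2
        + 2 * Real.cos (2 * θ) * ⟪H, D⟫ + 2 * Real.sin (2 * θ) * ⟪H, C⟫
        + 2 * Real.cos (2 * θ) * Real.sin (2 * θ) * ⟪D, C⟫ := by
      rw [norm_add_sq_real, norm_add_sq_real]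
      simp only [inner_add_left, real_inner_smul_left, real_inner_smul_right, norm_smul, mul_pow,
        Real.norm_eq_abs, sq_abs]
      ring
    rw [e]
    linear_combination (-(‖D‖ ^ 2 + ‖C‖ ^ 2) / 2) * Real.sin_sq_add_cos_sq (2 * θ)
  rw [intervalIntegral.integral_eq_sub_of_hasDerivAt key
    (Continuous.intervalIntegrable (by fun_prop) _ _)]
  simp only [sin_two_mul_two_pi, cos_two_mul_two_pi, mul_zero, Real.sin_zero, Real.cos_zero]
  ring

/-- Averaged form of the Gauss formula.  For a symmetric bilinear map `s` and an
orthonormal pair `u, w`, with `h` the average of `s(u_θ, u_θ)` and `ẑ` the average of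
`‖s(u_θ, u_θ)‖²` over the unit circle `u_θ = cos θ • u + sin θ • w`, one has
`⟪s(u,u), s(w,w)⟫ − ‖s(u,w)‖² = 3‖h‖² − 2ẑ`. -/
theorem stmt_1 {E F : Type*} [NormedAddCommGroup E] [InnerProductSpace ℝ E]
    [NormedAddCommGroup F] [InnerProductSpace ℝ F] [CompleteSpace F]
    (u w : E) (hu : ‖u‖ = 1) (hw : ‖w‖ = 1) (huw : ⟪u, w⟫ = 0)
    (s : E →ₗ[ℝ] E →ₗ[ℝ] F) (hsymm : ∀ x y : E, s x y = s y x) :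
    ⟪s u u, s w w⟫ - ‖s u w‖ ^ 2 =
      3 * ‖(1 / (2 * π)) • ∫ θ in (0:ℝ)..(2 * π),
              s (Real.cos θ • u + Real.sin θ • w) (Real.cos θ • u + Real.sin θ • w)‖ ^ 2
        - 2 * ((1 / (2 * π)) * ∫ θ in (0:ℝ)..(2 * π),
              ‖s (Real.cos θ • u + Real.sin θ • w) (Real.cos θ • u + Real.sin θ • w)‖ ^ 2) := by
  have hpt : ∀ θ : ℝ,
      s (Real.cos θ • u + Real.sin θ • w) (Real.cos θ • u + Real.sin θ • w) =
        (1 / 2 : ℝ) • (s u u + s w w) + Real.cos (2 * θ) • ((1 / 2 : ℝ) • (s u u - s w w))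
          + Real.sin (2 * θ) • s u w := by
    intro θ
    -- Homogenizing the constant term makes the identity linear in the vectors, with equal
    -- polynomial coefficients in `cos θ` and `sin θ`.
    have hH : (1 / 2 : ℝ) • (s u u + s w w) =
        ((Real.cos θ ^ 2 + Real.sin θ ^ 2) / 2) • (s u u + s w w) := by
      rw [Real.cos_sq_add_sin_sq]
    rw [hH, Real.cos_two_mul', Real.sin_two_mul]
    simp only [map_add, map_smul, LinearMap.add_apply, LinearMap.smul_apply, hsymm w u]
    module
  simp only [hpt]
  rw [integral_ellipse, integral_norm_sq_ellipse, smul_smul, ← mul_assoc (1 / (2 * π)) (2 * π) (_ + _),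
    one_div_mul_cancel Real.two_pi_pos.ne', one_smul, one_mul]
  simp only [norm_smul, mul_pow, norm_add_sq_real, norm_sub_sq_real, Real.norm_eq_abs, sq_abs]
  ring
end

section
/- Let E = ℝ² with its standard inner product and standard basis e₁, e₂. There exist a real inner product space F and symmetric bilinear maps s₋, s₊ : E → E → F such that ‖s₋(v,v)‖ ≤ 1 and ‖s₊(v,v)‖ ≤ 1 for every unit vector v ∈ E, and ⟨s₋(e₁,e₁), s₋(e₂,e₂)⟩ − ‖s₋(e₁,e₂)‖² = −2 while ⟨s₊(e₁,e₁), s₊(e₂,e₂)⟩ − ‖s₊(e₁,e₂)‖² = 1. Hence the bounds −2 ≤ K ≤ 1 in the curvature lemma are optimal. -/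
/-!
Identify `ℝ²` with `ℂ`. The multiplication form `s(x, y) = x * y` satisfies `‖s(v,v)‖ = ‖v‖²`, and
takes the values `1`, `-1`, `i` on `(e₁, e₁)`, `(e₂, e₂)`, `(e₁, e₂)`, so its curvature is
`-1 - 1 = -2`. The umbilic form `s(x, y) = ⟪x, y⟫ • e₁` also satisfies `‖s(v,v)‖ = ‖v‖²`, and its
curvature is `1 - 0 = 1`.
-/

open scoped RealInnerProductSpace

/-- The first standard basis vector of `ℝ²`. -/
noncomputable def e₁ : EuclideanSpace ℝ (Fin 2) := EuclideanSpace.single 0 1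

/-- The second standard basis vector of `ℝ²`. -/
noncomputable def e₂ : EuclideanSpace ℝ (Fin 2) := EuclideanSpace.single 1 1

/-- There are symmetric bilinear maps `s₋, s₊` on `ℝ²` with values in `F`, with
`‖s(v,v)‖ ≤ 1` for all unit `v`, realizing the extremal curvature values `-2` and `1`. -/
def ExtremalFormsExist (F : Type) [NormedAddCommGroup F] [InnerProductSpace ℝ F] : Prop :=
  ∃ sm sp : EuclideanSpace ℝ (Fin 2) →ₗ[ℝ] EuclideanSpace ℝ (Fin 2) →ₗ[ℝ] F,
    (∀ x y, sm x y = sm y x) ∧ (∀ x y, sp x y = sp y x) ∧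
    (∀ v : EuclideanSpace ℝ (Fin 2), ‖v‖ = 1 → ‖sm v v‖ ≤ 1) ∧
    (∀ v : EuclideanSpace ℝ (Fin 2), ‖v‖ = 1 → ‖sp v v‖ ≤ 1) ∧
    ⟪sm e₁ e₁, sm e₂ e₂⟫ - ‖sm e₁ e₂‖ ^ 2 = -2 ∧
    ⟪sp e₁ e₁, sp e₂ e₂⟫ - ‖sp e₁ e₂‖ ^ 2 = 1

/-- Complex multiplication, in real coordinates, as a bilinear map on `ℝ²`. -/
noncomputable def complexMulForm :
    EuclideanSpace ℝ (Fin 2) →ₗ[ℝ] EuclideanSpace ℝ (Fin 2) →ₗ[ℝ] EuclideanSpace ℝ (Fin 2) :=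
  LinearMap.mk₂ ℝ (fun x y => !₂[x 0 * y 0 - x 1 * y 1, x 0 * y 1 + x 1 * y 0])
    (by intro x x' y; ext i; fin_cases i <;> simp <;> ring)
    (by intro c x y; ext i; fin_cases i <;> simp <;> ring)
    (by intro x y y'; ext i; fin_cases i <;> simp <;> ring)
    (by intro c x y; ext i; fin_cases i <;> simp <;> ring)

/-- The umbilic form `(x, y) ↦ ⟪x, y⟫ • e₁`, the second fundamental form of a unit
sphere, with `e₁` in the role of the unit normal. -/
noncomputable def umbilicForm :
    EuclideanSpace ℝ (Fin 2) →ₗ[ℝ] EuclideanSpace ℝ (Fin 2) →ₗ[ℝ] EuclideanSpace ℝ (Fin 2) :=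
  LinearMap.mk₂ ℝ (fun x y => ⟪x, y⟫ • e₁)
    (by intro x x' y; simp only [inner_add_left, add_smul])
    (by intro c x y; simp only [real_inner_smul_left, mul_smul])
    (by intro x y y'; simp only [inner_add_right, add_smul])
    (by intro c x y; simp only [real_inner_smul_right, mul_smul])

theorem complexMulForm_apply (x y : EuclideanSpace ℝ (Fin 2)) :
    complexMulForm x y = !₂[x 0 * y 0 - x 1 * y 1, x 0 * y 1 + x 1 * y 0] := rfl

theorem umbilicForm_apply (x y : EuclideanSpace ℝ (Fin 2)) :
    umbilicForm x y = ⟪x, y⟫ • e₁ := rfl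

theorem norm_complexMulForm_self (v : EuclideanSpace ℝ (Fin 2)) :
    ‖complexMulForm v v‖ = ‖v‖ ^ 2 := by
  rw [← sq_eq_sq₀ (norm_nonneg _) (by positivity), EuclideanSpace.real_norm_sq_eq,
    EuclideanSpace.real_norm_sq_eq]
  simp [complexMulForm_apply, Fin.sum_univ_two]
  ring

theorem norm_umbilicForm_self (v : EuclideanSpace ℝ (Fin 2)) :
    ‖umbilicForm v v‖ = ‖v‖ ^ 2 := by
  simp [umbilicForm_apply, norm_smul, e₁]

/-- the bounds `-2 ≤ K ≤ 1` in the curvature lemma are optimal: there exist a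
real inner product space `F` and symmetric bilinear maps `s₋, s₊ : ℝ² → ℝ² → F` with all
"normal curvatures" at most `1` attaining the values `-2` and `1` respectively. -/
theorem stmt_2 :
    ∃ (F : Type) (nF : NormedAddCommGroup F) (iF : @InnerProductSpace ℝ F _ nF.toSeminormedAddCommGroup),
      @ExtremalFormsExist F nF iF := by
  refine ⟨EuclideanSpace ℝ (Fin 2), inferInstance, inferInstance, complexMulForm, umbilicForm,
    ?_, ?_, ?_, ?_, ?_, ?_⟩
  · intro x y
    ext i
    fin_cases i <;> simp [complexMulForm_apply] <;> ring
  · intro x y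
    rw [umbilicForm_apply, umbilicForm_apply, real_inner_comm]
  · intro v hv
    simp [norm_complexMulForm_self, hv]
  · intro v hv
    simp [norm_umbilicForm_self, hv]
  · rw [EuclideanSpace.real_norm_sq_eq]
    simp [complexMulForm_apply, e₁, e₂, PiLp.inner_apply, Fin.sum_univ_two]
    norm_num
  · simp [umbilicForm_apply, e₁, e₂, PiLp.inner_apply]
end

section
/- Suppose Γ is a connected graph with uniformly polynomial growth. Then there exist ρ > 0, an integer d > 0, and a map Φ from the vertex set of Γ to ℝ^d (Euclidean space) such that: (a) if v and w are adjacent in Γ, then |Φ(v) − Φ(w)| ≤ ρ; and (b) if V and W are disjoint cliques in Γ, then every point of the convex hull of Φ(V) is at Euclidean distance at least 1 from every point of the convex hull of Φ(W). -/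
/-!
The graph is treated as a metric space in which every ball of large radius `R` has at most `R ^ k`
points. The map is the concatenation of a near block and a far block of coordinates.

*Near block.* A greedy colouring (`exists_coloring`) separates any two distinct points at distance
at most `R₁ + 2` with `K` colours, and a point is sent to `K` times the basis vector of its colour.
Two disjoint cliques at distance less than `R₁` use disjoint sets of colours, so their hulls lie in
opposite faces of a simplex: some coordinate is at least `1` on one hull point and `0` on the other.

*Far block.* It consists of 1-Lipschitz functions such that any two points at distance at least `R₁`
differ by at least `3` in one of them (`exists_far_map`). A clique has diameter at most `1`, so the
hulls of two far cliques still differ by `1` in that coordinate.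

The far block is a sum over the scales `t_j = b ^ (7 ^ j)`. At a scale `t`, ball carving
(`exists_carving`) removes from a set a boundary of relative local density at most `1 / t`, and the
rest splits into clusters of diameter `O(t ^ 5)` that are `2 * t ^ 3` apart. Since balls of radius
`t ^ 6` have at most `t ^ (6 * k)` points, repeating this `6 * k + 1` times inside the successive
boundaries leaves nothing (`exists_layers`). Hence a number of layers independent of `t` covers the
space. Within each layer the clusters are coloured with `t ^ (43 * k)` colours, and the
base-`t` digits of the colours, together with the distance to the layer, give boundedly many
`1 / t`-Lipschitz functions with oscillation at most `2 * t ^ 2` which separate by `t` every pair at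
distance between `t ^ 6` and `t ^ 42 = t_{j + 1} ^ 6` (`exists_scale_map`). Even and odd `j` are
summed in separate coordinates. For a pair belonging to scale `j`, the smaller scales of the same
parity are negligible since they are bounded by a small fraction of `t_j`, and the larger ones since
their Lipschitz constants are tiny (`sum_separated`).
-/

/-- A graph has uniformly polynomial growth if there is a polynomial `p` bounding the number
of vertices in any ball of radius `R` (with respect to the shortest-path distance). -/
def HasUniformPolyGrowth {V : Type*} (G : SimpleGraph V) : Prop :=
  ∃ p : Polynomial ℝ, ∀ (x : V) (R : ℕ),
    {y : V | G.Reachable x y ∧ G.dist x y ≤ R}.Finite ∧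
    ({y : V | G.Reachable x y ∧ G.dist x y ≤ R}.ncard : ℝ) ≤ p.eval (R : ℝ)

open Metric

/-! ### Greedy choices along a well-order -/

/-- Transfinite greedy construction: if a value satisfying `Q z g b` exists for every family `g` of
values chosen before `z`, then all the choices can be made simultaneously. -/
lemma exists_greedy {V β : Type*} [LinearOrder V] [WellFoundedLT V]
    (Q : ∀ z : V, (∀ y, y < z → β) → β → Prop) (h : ∀ z g, ∃ b, Q z g b) :
    ∃ f : V → β, ∀ z, Q z (fun y _ => f y) (f z) := by
  choose c hc using h
  let f := WellFounded.fix (wellFounded_lt (α := V)) (C := fun _ => β) c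
  refine ⟨f, fun z => ?_⟩
  have : f z = c z (fun y _ => f y) := WellFounded.fix_eq _ _ _
  rw [this]
  exact hc _ _

/-- Greedy colouring. The ball counts its own centre, so strictly fewer than `Fintype.card α`
colours are forbidden at each step. -/
lemma exists_coloring {V α : Type*} [MetricSpace V] [Fintype α] (R : ℝ) (hR : 0 ≤ R)
    (h : ∀ x : V, (closedBall x R).Finite ∧ (closedBall x R).ncard ≤ Fintype.card α) :
    ∃ c : V → α, ∀ x y, x ≠ y → dist x y ≤ R → c x ≠ c y := by
  classical
  obtain ⟨_, _⟩ := exists_wellFoundedLT V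
  obtain ⟨c, hc⟩ := exists_greedy (V := V) (β := α)
    (fun z g b => ∀ y (hy : y < z), dist y z ≤ R → g y hy ≠ b) (by
      intro z g
      by_contra! hcon
      choose y hy hd hg using hcon
      have hinj : Function.Injective y := by
        intro a b hab
        rw [← hg a, ← hg b]
        congr 1
      have hsub : Set.range y ⊆ closedBall z R \ {z} := by
        rintro _ ⟨a, rfl⟩
        exact ⟨hd a, (hy a).ne⟩
      have h1 := Set.ncard_le_ncard hsub ((h z).1.sdiff)
      rw [Set.ncard_range_of_injective hinj, Nat.card_eq_fintype_card] at h1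
      have h2 := Set.ncard_sdiff_singleton_lt_of_mem (mem_closedBall_self hR : z ∈ _) (h z).1
      have h3 := (h z).2
      omega)
  refine ⟨c, fun x y hxy hd => ?_⟩
  rcases lt_or_gt_of_ne hxy with hlt | hlt
  · exact hc y x hlt hd
  · exact (hc x y hlt (by rwa [dist_comm])).symm

/-! ### Ball carving -/

/-- A sequence that stays below `n < (1 + 1 / t) ^ m` cannot grow by a factor more than `1 + 1 / t`
at each of the first `m + 1` steps. The extra step takes care of `a 0 = 0`. -/
lemma exists_slow_step (a : ℕ → ℕ) (t m n : ℕ) (hn : n * t ^ m < (t + 1) ^ m)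
    (ha : a (m + 1) ≤ n) : ∃ i ≤ m, t * a (i + 1) ≤ (t + 1) * a i := by
  by_contra! hcon
  have key : ∀ i ≤ m, (t + 1) ^ i ≤ t ^ i * a (i + 1) := by
    intro i
    induction i with
    | zero =>
      intro _
      have := hcon 0 (Nat.zero_le _)
      have : 0 < a 1 := Nat.pos_of_ne_zero (by rintro h; simp [h] at this)
      simpa using Nat.succ_le_of_lt this
    | succ i ih =>
      intro hi
      calc (t + 1) ^ (i + 1) = (t + 1) ^ i * (t + 1) := pow_succ _ _
        _ ≤ t ^ i * a (i + 1) * (t + 1) := Nat.mul_le_mul_right _ (ih (by omega))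
        _ = t ^ i * ((t + 1) * a (i + 1)) := by ring
        _ ≤ t ^ i * (t * a (i + 1 + 1)) := Nat.mul_le_mul_left _ (hcon _ hi).le
        _ = _ := by ring
  have h1 := key m le_rfl
  have h2 : t ^ m * a (m + 1) ≤ t ^ m * n := Nat.mul_le_mul_left _ ha
  rw [mul_comm] at hn
  omega

lemma card_le_of_fibers {V : Type*} [DecidableEq V] (c : V → V) (S T : Finset V) (t : ℕ)
    (h : ∀ z ∈ S.image c, t * (S.filter (c · = z)).card ≤ (T.filter (c · = z)).card) :
    t * S.card ≤ T.card := by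
  rw [Finset.card_eq_sum_card_image c S, Finset.mul_sum]
  refine (Finset.sum_le_sum h).trans ?_
  rw [Finset.sum_card_fiberwise_eq_card_filter]
  exact Finset.card_filter_le _ _

/-- Ball carving. Around each point `z`, in the order of a well-order, a ball of radius
`(i + 1) * L` is removed from what is left of `X`, where `i ≤ m` is such that the outer shell of width
`L` has at most `1 / t` times as many points as the inner ball. The shells form `N` and the inner
balls form the clusters, the fibres of `c` on `X \ N`. Each point of `N` is charged to the cluster
it surrounds; clusters are disjoint, so `N` is locally sparser than `X` by a factor `t`. -/
lemma exists_carving {V : Type*} [MetricSpace V] (hfin : ∀ (x : V) (R : ℝ), (closedBall x R).Finite)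
    (t m n L : ℕ) (hn : n * t ^ m < (t + 1) ^ m)
    (hcard : ∀ x : V, (closedBall x (((m + 1) * L : ℕ) : ℝ)).ncard ≤ n) (X : Set V) :
    ∃ N ⊆ X, ∃ c : V → V, (∀ x ∈ X \ N, dist x (c x) ≤ ((m + 1) * L : ℕ)) ∧
      (∀ x ∈ X \ N, ∀ y ∈ X \ N, c x ≠ c y → L ≤ dist x y) ∧
      ∀ (w : V) (r : ℝ), t * (N ∩ closedBall w r).ncard ≤
        (X ∩ closedBall w (r + 2 * ((m + 1) * L : ℕ))).ncard := by
  classical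
  obtain ⟨_, _⟩ := exists_wellFoundedLT V
  obtain ⟨f, hf⟩ := exists_greedy (V := V) (β := ℕ)
    (fun z g i => i ≤ m ∧
      t * ({x ∈ X | ∀ y (hy : y < z), ¬ dist x y ≤ (((g y hy) + 1) * L : ℕ)} ∩
          closedBall z (((i + 1) * L : ℕ) : ℝ)).ncard ≤
        (t + 1) * ({x ∈ X | ∀ y (hy : y < z), ¬ dist x y ≤ (((g y hy) + 1) * L : ℕ)} ∩
          closedBall z ((i * L : ℕ) : ℝ)).ncard) (by
      intro z g
      exact exists_slow_step (fun i => ({x ∈ X | ∀ y (hy : y < z),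
        ¬ dist x y ≤ (((g y hy) + 1) * L : ℕ)} ∩ closedBall z ((i * L : ℕ) : ℝ)).ncard) t m n hn
        ((Set.ncard_le_ncard Set.inter_subset_right (hfin _ _)).trans (hcard z)))
  have hex : ∀ x : V, ∃ z, dist x z ≤ ((f z + 1) * L : ℕ) :=
    fun x => ⟨x, by rw [dist_self]; positivity⟩
  have hmin : ∀ x : V, ∃ z, dist x z ≤ ((f z + 1) * L : ℕ) ∧
      ∀ y < z, ¬ dist x y ≤ ((f y + 1) * L : ℕ) := by
    intro x
    obtain ⟨z, hz, hz'⟩ := (wellFounded_lt (α := V)).has_min {z | dist x z ≤ ((f z + 1) * L : ℕ)}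
      (hex x)
    exact ⟨z, hz, fun y hy h => hz' y h hy⟩
  -- `c x` is the first centre whose enlarged ball captures `x`.
  choose c hc hc' using hmin
  have hcM : ∀ x, dist x (c x) ≤ ((m + 1) * L : ℕ) := fun x => (hc x).trans (by
    exact_mod_cast Nat.mul_le_mul_right _ (Nat.succ_le_succ (hf (c x)).1))
  have hceq : ∀ x z, dist x z ≤ ((f z + 1) * L : ℕ) →
      (∀ y < z, ¬ dist x y ≤ ((f y + 1) * L : ℕ)) → c x = z := by
    intro x z h1 h2
    rcases lt_trichotomy (c x) z with h | h | h
    · exact absurd (hc x) (h2 _ h)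
    · exact h
    · exact absurd h1 (hc' x _ h)
  refine ⟨{x ∈ X | ¬ dist x (c x) ≤ (f (c x) * L : ℕ)}, fun x hx => hx.1, c,
    fun x _ => hcM x, ?_, ?_⟩
  · have key : ∀ x ∈ X, dist x (c x) ≤ (f (c x) * L : ℕ) → ∀ y, c x < c y → L ≤ dist x y := by
      intro x _ hx y hlt
      have h1 := hc' y _ hlt
      push Not at h1
      have h2 := dist_triangle y x (c x)
      rw [dist_comm y x] at h2
      push_cast at h1 hx
      linarith
    intro x hx y hy hne
    have hx2 : dist x (c x) ≤ (f (c x) * L : ℕ) := by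
      by_contra h; exact hx.2 ⟨hx.1, h⟩
    have hy2 : dist y (c y) ≤ (f (c y) * L : ℕ) := by
      by_contra h; exact hy.2 ⟨hy.1, h⟩
    rcases lt_or_gt_of_ne hne with h | h
    · exact key x hx.1 hx2 y h
    · rw [dist_comm]; exact key y hy.1 hy2 x h
  · intro w r
    have fS := (hfin w r).inter_of_right {x ∈ X | ¬ dist x (c x) ≤ (f (c x) * L : ℕ)}
    have fT := (hfin w (r + 2 * ((m + 1) * L : ℕ))).inter_of_right X
    rw [Set.ncard_eq_toFinset_card _ fS, Set.ncard_eq_toFinset_card _ fT]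
    apply card_le_of_fibers c
    intro z hz
    rw [Finset.mem_image] at hz
    obtain ⟨x₀, hx₀, rfl⟩ := hz
    rw [Set.Finite.mem_toFinset] at hx₀
    set z := c x₀ with hzdef
    have h1 := (hf z).2
    -- `A` and `B` are the outer and the inner ball in what is left of `X`; the shell is `A \ B`.
    set A := {x ∈ X | ∀ y, y < z → ¬ dist x y ≤ ((f y + 1) * L : ℕ)} ∩
      closedBall z (((f z + 1) * L : ℕ) : ℝ) with hA
    set B := {x ∈ X | ∀ y, y < z → ¬ dist x y ≤ ((f y + 1) * L : ℕ)} ∩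
      closedBall z ((f z * L : ℕ) : ℝ) with hB
    have hBA : B ⊆ A := by
      rintro x ⟨hx1, hx2⟩
      refine ⟨hx1, closedBall_subset_closedBall ?_ hx2⟩
      exact_mod_cast Nat.mul_le_mul_right _ (Nat.le_succ _)
    have fA : A.Finite := (hfin _ _).inter_of_right _
    have fB : B.Finite := fA.subset hBA
    have h2 : (A \ B).ncard + B.ncard = A.ncard := Set.ncard_sdiff_add_ncard_of_subset hBA fA
    have h3 : t * (A \ B).ncard ≤ B.ncard := by
      rw [← h2] at h1
      nlinarith
    refine (Nat.mul_le_mul_left t ?_).trans (h3.trans ?_)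
    · rw [← Set.ncard_coe_finset]
      apply Set.ncard_le_ncard _ (fA.sdiff)
      intro x hx
      simp only [Finset.coe_filter, Set.Finite.mem_toFinset, Set.mem_ofPred_eq] at hx
      obtain ⟨⟨⟨hxX, hxN⟩, hxw⟩, hxz⟩ := hx
      refine ⟨⟨⟨hxX, ?_⟩, ?_⟩, ?_⟩
      · rw [← hxz]; exact hc' x
      · rw [← hxz]; exact hc x
      · intro hxB
        rw [hxz] at hxN
        exact hxN hxB.2
    · rw [← Set.ncard_coe_finset]
      apply Set.ncard_le_ncard _ (Finset.finite_toSet _)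
      intro x hx
      simp only [Finset.coe_filter, Set.Finite.mem_toFinset, Set.mem_ofPred_eq]
      refine ⟨⟨hx.1.1, ?_⟩, hceq x z (hBA hx).2 hx.1.2⟩
      have e1 : dist x z ≤ ((m + 1) * L : ℕ) := by
        have := hcM x
        rwa [hceq x z (hBA hx).2 hx.1.2] at this
      have e2 : dist x₀ z ≤ ((m + 1) * L : ℕ) := hcM x₀
      have e3 : dist x₀ w ≤ r := hx₀.2
      rw [mem_closedBall]
      have e4 := dist_triangle x z w
      have e5 := dist_triangle_left z w x₀
      linarith

/-- Carving the successive boundaries `D` times. A surviving point would give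
`t ^ D ≤ n`, so every point lies in a cluster of one of the `D` layers. -/
lemma exists_layers {V : Type*} [MetricSpace V] (hfin : ∀ (x : V) (R : ℝ), (closedBall x R).Finite)
    (t m n L D : ℕ) (hn : n * t ^ m < (t + 1) ^ m) (hD : n < t ^ D)
    (hcard : ∀ x : V, (closedBall x (((m + 1) * L : ℕ) : ℝ)).ncard ≤ n)
    (hcard' : ∀ x : V, (closedBall x (2 * D * ((m + 1) * L : ℕ) : ℝ)).ncard ≤ n) :
    ∃ (U : Fin D → Set V) (c : Fin D → V → V), (∀ x, ∃ i, x ∈ U i) ∧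
      (∀ i, ∀ x ∈ U i, dist x (c i x) ≤ ((m + 1) * L : ℕ)) ∧
      (∀ i, ∀ x ∈ U i, ∀ y ∈ U i, c i x ≠ c i y → L ≤ dist x y) := by
  choose next hsub c hc1 hc2 hc3 using exists_carving hfin t m n L hn hcard
  let N : ℕ → Set V := fun i => next^[i] Set.univ
  have hN : ∀ i, N (i + 1) = next (N i) := fun i => Function.iterate_succ_apply' _ _ _
  have hbound : ∀ i (w : V) (r : ℝ), t ^ i * (N i ∩ closedBall w r).ncard ≤
      (closedBall w (r + 2 * i * ((m + 1) * L : ℕ))).ncard := by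
    intro i
    induction i with
    | zero =>
      intro w r
      simp [N]
    | succ i ih =>
      intro w r
      calc t ^ (i + 1) * (N (i + 1) ∩ closedBall w r).ncard
          = t ^ i * (t * (next (N i) ∩ closedBall w r).ncard) := by rw [hN]; ring
        _ ≤ _ := Nat.mul_le_mul_left _ (hc3 (N i) w r)
        _ ≤ _ := ih _ _
        _ = _ := by congr 2; push_cast; ring
  have hempty : ∀ x, x ∉ N D := by
    intro x hx
    have h1 := hbound D x 0
    rw [zero_add] at h1
    have h2 : 0 < (N D ∩ closedBall x 0).ncard :=
      (Set.ncard_pos ((hfin _ _).inter_of_right _)).2 ⟨x, hx, mem_closedBall_self le_rfl⟩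
    have h3 := h1.trans (hcard' x)
    have h4 := Nat.le_mul_of_pos_right (t ^ D) h2
    omega
  refine ⟨fun i => N i \ N (i + 1), fun i => c (N i), ?_, ?_, ?_⟩
  · intro x
    by_contra! hcon
    have : ∀ i ≤ D, x ∈ N i := by
      intro i
      induction i with
      | zero => intro _; exact Set.mem_univ _
      | succ i ih =>
        intro hi
        by_contra hx
        exact hcon ⟨i, hi⟩ ⟨ih (by omega), hx⟩
    exact hempty x (this D le_rfl)
  · intro i x hx
    simp only [hN] at hx
    exact hc1 _ x hx
  · intro i x hx y hy
    simp only [hN] at hx hy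
    exact hc2 _ x hx y hy

/-! ### The functions at a single scale -/

lemma abs_clamp_sub_clamp_le (a b u v : ℝ) :
    |max a (min b u) - max a (min b v)| ≤ |u - v| := by
  have h1 := abs_max_sub_max_le_max a (min b u) a (min b v)
  have h2 := abs_min_sub_min_le_max b u b v
  simp only [sub_self, abs_zero] at h1 h2
  have h3 := abs_nonneg (u - v)
  have h4 := abs_nonneg (min b u - min b v)
  rw [max_eq_right h4] at h1
  rw [max_eq_right h3] at h2
  linarith

lemma abs_clamp_sub_clamp_le' {a b : ℝ} (hab : a ≤ b) (u v : ℝ) :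
    |max a (min b u) - max a (min b v)| ≤ b - a := by
  rw [abs_le]
  have h1 := le_max_left a (min b u)
  have h2 := le_max_left a (min b v)
  have h3 : max a (min b u) ≤ b := max_le hab (min_le_left _ _)
  have h4 : max a (min b v) ≤ b := max_le hab (min_le_left _ _)
  constructor <;> linarith

lemma two_mul_pow_le (t : ℕ) (ht : 1 ≤ t) : 2 * t ^ t ≤ (t + 1) ^ t := by
  have h : (0 : ℝ) < t := by exact_mod_cast ht
  have h1 := one_add_mul_le_pow (a := (1 / t : ℝ)) (by linarith [show (0 : ℝ) ≤ 1 / t by positivity]) t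
  have h2 : (1 : ℝ) + t * (1 / t) = 2 := by field_simp; norm_num
  rw [h2] at h1
  have h3 : (2 : ℝ) * t ^ t ≤ (t + 1) ^ t := by
    calc (2 : ℝ) * t ^ t ≤ (1 + 1 / t) ^ t * t ^ t := by gcongr
      _ = (t + 1) ^ t := by rw [← mul_pow]; congr 1; field_simp
  exact_mod_cast h3

/-- For large `t`, `m = t ^ 2` carving steps suffice for balls with `t ^ (6 * k)` points, because
`(1 + 1 / t) ^ (t ^ 2) ≥ 2 ^ t`. -/
lemma exists_threshold (k R₀ : ℕ) : ∃ t₀ : ℕ, ∀ t ≥ t₀,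
    R₀ ≤ t ∧ 36 * k + 16 ≤ t ∧ t ^ (6 * k) * t ^ (t ^ 2) < (t + 1) ^ (t ^ 2) := by
  have h1 : ∀ᶠ t : ℕ in Filter.atTop, t ^ (6 * k) < 2 ^ t := by
    have h := (isLittleO_pow_const_const_pow_of_one_lt (R := ℝ) (6 * k)
      (show (1 : ℝ) < 2 by norm_num)).def (show (0 : ℝ) < 1 / 2 by norm_num)
    filter_upwards [h] with t ht
    rw [Real.norm_of_nonneg (by positivity), Real.norm_of_nonneg (by positivity)] at ht
    have h2 : (0 : ℝ) < 2 ^ t := by positivity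
    have : ((t : ℝ)) ^ (6 * k) < 2 ^ t := by linarith
    exact_mod_cast this
  obtain ⟨t₀, h⟩ := Filter.eventually_atTop.1
    ((Filter.eventually_ge_atTop R₀).and ((Filter.eventually_ge_atTop (36 * k + 16)).and h1))
  refine ⟨t₀, fun t ht => ⟨(h t ht).1, (h t ht).2.1, ?_⟩⟩
  have h2 := (h t ht).2.1
  calc t ^ (6 * k) * t ^ (t ^ 2) < 2 ^ t * t ^ (t ^ 2) :=
        Nat.mul_lt_mul_of_pos_right (h t ht).2.2 (Nat.pow_pos (by omega))
    _ = (2 * t ^ t) ^ t := by rw [mul_pow, ← pow_mul, sq]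
    _ ≤ ((t + 1) ^ t) ^ t := Nat.pow_le_pow_left (two_mul_pow_le t (by omega)) _
    _ = _ := by rw [← pow_mul, sq]

/-- A digit which is constant on each cluster, scaled by `2 * t`, is `1 / t`-Lipschitz on a union of
clusters at mutual distance at least `2 * t ^ 3`; it is extended to the whole space and truncated. -/
lemma exists_digit_map {V : Type*} [MetricSpace V] (U : Set V) (t : ℕ) (ht : 1 ≤ t) (a : V → ℕ)
    (ha : ∀ x, a x < t)
    (hsep : ∀ x ∈ U, ∀ y ∈ U, a x ≠ a y → ((2 * t ^ 3 : ℕ) : ℝ) ≤ dist x y) :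
    ∃ g : V → ℝ, (∀ x y, |g x - g y| ≤ dist x y / t) ∧ (∀ x y, |g x - g y| ≤ 2 * t ^ 2) ∧
      ∀ x ∈ U, g x = 2 * t * a x := by
  have ht' : (1 : ℝ) ≤ t := by exact_mod_cast ht
  have hrange : ∀ x, (0 : ℝ) ≤ 2 * t * a x ∧ (2 * t * a x : ℝ) ≤ 2 * t ^ 2 := by
    intro x
    have : (a x : ℝ) ≤ t := by exact_mod_cast (ha x).le
    refine ⟨by positivity, ?_⟩
    nlinarith
  have hlip : LipschitzOnWith (1 / t : NNReal) (fun x => (2 * t * a x : ℝ)) U := by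
    refine LipschitzOnWith.of_dist_le_mul fun x hx y hy => ?_
    rw [Real.dist_eq]
    by_cases h : a x = a y
    · simp only [h, sub_self, abs_zero]; positivity
    · have h1 := hsep x hx y hy h
      have h2 : |(2 * t * a x : ℝ) - 2 * t * a y| ≤ 2 * t ^ 2 := by
        rw [abs_le]
        constructor <;> linarith [(hrange x).1, (hrange x).2, (hrange y).1, (hrange y).2]
      refine h2.trans ?_
      push_cast at h1 ⊢
      rw [div_mul_eq_mul_div, one_mul, le_div_iff₀ (by linarith)]
      linarith [h1]
  obtain ⟨g, hg, hgU⟩ := hlip.extend_real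
  refine ⟨fun x => max 0 (min (2 * t ^ 2) (g x)), fun x y => ?_, fun x y => ?_, fun x hx => ?_⟩
  · refine (abs_clamp_sub_clamp_le _ _ _ _).trans ?_
    have := hg.dist_le_mul x y
    rw [Real.dist_eq] at this
    push_cast at this
    rwa [div_mul_eq_mul_div, one_mul] at this
  · simpa using abs_clamp_sub_clamp_le' (show (0 : ℝ) ≤ 2 * t ^ 2 by positivity) (g x) (g y)
  · have h1 := hgU hx
    simp only at h1 ⊢
    rw [← h1, min_eq_right (hrange x).2, max_eq_right (hrange x).1]

/-- The functions at scale `t`: in each layer, the truncated distance to the layer (index `none`)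
and one function for each digit of the colour of a cluster (index `some e`). -/
lemma exists_scale_map {V : Type*} [MetricSpace V] (k R₀ : ℕ)
    (hfin : ∀ (x : V) (R : ℝ), (closedBall x R).Finite)
    (hgrowth : ∀ (x : V) (R : ℕ), R₀ ≤ R → (closedBall x (R : ℝ)).ncard ≤ R ^ k) (t : ℕ)
    (ht₀ : R₀ ≤ t) (ht : 36 * k + 16 ≤ t)
    (htpow : t ^ (6 * k) * t ^ (t ^ 2) < (t + 1) ^ (t ^ 2)) :
    ∃ F : Fin (6 * k + 1) × Option (Fin (43 * k)) → V → ℝ,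
      (∀ p x y, |F p x - F p y| ≤ dist x y / t) ∧ (∀ p x y, |F p x - F p y| ≤ 2 * t ^ 2) ∧
      ∀ x y, (t : ℝ) ^ 6 ≤ dist x y → dist x y ≤ (t : ℝ) ^ 42 → ∃ p, t ≤ |F p x - F p y| := by
  have ht1 : 1 < t := by omega
  have htR : (16 : ℝ) ≤ t := by exact_mod_cast (show 16 ≤ t by omega)
  have hpow : ∀ i, 1 ≤ i → R₀ ≤ t ^ i := fun i hi => ht₀.trans (Nat.le_self_pow (by omega) t)
  have hball : ∀ (x : V) (R : ℝ), R ≤ (t : ℝ) ^ 6 → (closedBall x R).ncard ≤ t ^ (6 * k) := by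
    intro x R hR
    refine (Set.ncard_le_ncard (closedBall_subset_closedBall hR) (hfin _ _)).trans ?_
    rw [pow_mul]
    exact_mod_cast hgrowth x (t ^ 6) (hpow 6 (by omega))
  have hM : (((t ^ 2 + 1) * (2 * t ^ 3) : ℕ) : ℝ) ≤ 3 * t ^ 5 := by
    push_cast
    nlinarith [pow_pos (show (0 : ℝ) < t by linarith) 3, pow_le_pow_left₀ (by norm_num) htR 2]
  have hDM : 2 * ((6 * k + 1 : ℕ) : ℝ) * (3 * t ^ 5) ≤ t ^ 6 := by
    have : 6 * ((6 * k + 1 : ℕ) : ℝ) ≤ t := by exact_mod_cast (by omega)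
    nlinarith [pow_pos (show (0 : ℝ) < t by linarith) 5]
  have h5 : (0 : ℝ) < t ^ 5 := by positivity
  have h6 : (16 : ℝ) * t ^ 5 ≤ t ^ 6 := by nlinarith
  have h2 : (t : ℝ) ^ 2 ≤ t ^ 5 := pow_le_pow_right₀ (by linarith) (by norm_num)
  obtain ⟨U, c, hU, hc, hsep⟩ := exists_layers hfin t (t ^ 2) (t ^ (6 * k)) (2 * t ^ 3) (6 * k + 1)
    htpow (Nat.pow_lt_pow_right ht1 (by omega)) (fun x => hball x _ (by linarith))
    (fun x => hball x _ ((mul_le_mul_of_nonneg_left hM (by positivity)).trans hDM))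
  obtain ⟨col, hcol⟩ := exists_coloring (V := V) (α := Fin (43 * k) → Fin t) (((t ^ 43 : ℕ) : ℝ))
    (by positivity) (fun x => ⟨hfin _ _, by
      simpa [pow_mul] using hgrowth x (t ^ 43) (hpow 43 (by omega))⟩)
  have hdig : ∀ (i : Fin (6 * k + 1)) (e : Fin (43 * k)), ∃ g : V → ℝ,
      (∀ x y, |g x - g y| ≤ dist x y / t) ∧ (∀ x y, |g x - g y| ≤ 2 * t ^ 2) ∧
      ∀ x ∈ U i, g x = 2 * t * ((col (c i x) e : ℕ) : ℝ) := fun i e =>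
    exists_digit_map (U i) t (by omega) (fun x => col (c i x) e) (fun x => (col (c i x) e).2)
      (fun x hx y hy hne => hsep i x hx y hy (fun h => hne (by rw [h])))
  choose g hg1 hg2 hgU using hdig
  let h : Fin (6 * k + 1) → V → ℝ := fun i x => max 0 (min t (infDist x (U i) / t))
  have hh1 : ∀ i x y, |h i x - h i y| ≤ dist x y / t := by
    intro i x y
    refine (abs_clamp_sub_clamp_le _ _ _ _).trans ?_
    rw [← sub_div, abs_div, abs_of_nonneg (show (0 : ℝ) ≤ t by positivity)]
    have := (lipschitz_infDist_pt (U i)).dist_le_mul x y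
    rw [Real.dist_eq, NNReal.coe_one, one_mul] at this
    gcongr
  have hh2 : ∀ i x y, |h i x - h i y| ≤ 2 * t ^ 2 := by
    intro i x y
    refine (abs_clamp_sub_clamp_le' (by positivity) _ _).trans ?_
    nlinarith
  refine ⟨fun p => p.2.elim (h p.1) (g p.1), ?_, ?_, ?_⟩
  · rintro ⟨i, _ | e⟩ x y
    exacts [hh1 i x y, hg1 i e x y]
  · rintro ⟨i, _ | e⟩ x y
    exacts [hh2 i x y, hg2 i e x y]
  intro x y hxy hxy'
  obtain ⟨i, hx⟩ := hU x
  -- Either the distance to the layer separates `x` from `y`, or `y` is close to a point `u` of the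
  -- layer in a cluster other than that of `x`, and a digit separates `x` from `u`.
  by_cases hy : (t : ℝ) ^ 2 ≤ infDist y (U i)
  · refine ⟨(i, none), ?_⟩
    have e1 : h i x = 0 := by simp [h, infDist_zero_of_mem hx]
    have e2 : h i y = t := by
      have : (t : ℝ) ≤ infDist y (U i) / t := by rw [le_div_iff₀ (by linarith)]; nlinarith
      simp [h, min_eq_left this]
    simp [e1, e2]
  · push Not at hy
    obtain ⟨u, hu, hyu⟩ := (infDist_lt_iff ⟨x, hx⟩).1 hy
    have hcx := (hc i x hx).trans hM
    have hcu := (hc i u hu).trans hM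
    have hne : c i x ≠ c i u := by
      intro heq
      rw [heq] at hcx
      have d1 := dist_triangle x u y
      have d2 := dist_triangle_right x u (c i u)
      rw [dist_comm u y] at d1
      linarith
    have hclose : dist (c i x) (c i u) ≤ ((t ^ 43 : ℕ) : ℝ) := by
      have d1 := dist_triangle4 (c i x) x u (c i u)
      have d2 := dist_triangle x y u
      rw [dist_comm (c i x) x] at d1
      have d3 : (t : ℝ) ^ 6 ≤ t ^ 42 := pow_le_pow_right₀ (by linarith) (by norm_num)
      have d4 : (16 : ℝ) * t ^ 42 ≤ t ^ 43 := by
        rw [pow_succ (t : ℝ) 42, mul_comm]; gcongr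
      push_cast
      linarith
    obtain ⟨e, he⟩ := Function.ne_iff.1 (hcol _ _ hne hclose)
    refine ⟨(i, some e), ?_⟩
    have hyu' : |g i e y - g i e u| ≤ t := by
      refine (hg1 i e y u).trans ?_
      rw [div_le_iff₀ (by linarith)]
      nlinarith
    have hxu : 2 * (t : ℝ) ≤ |g i e x - g i e u| := by
      rw [hgU i e x hx, hgU i e u hu, ← mul_sub, abs_mul, abs_of_nonneg (by positivity)]
      have : (1 : ℝ) ≤ |((col (c i x) e : ℕ) : ℝ) - ((col (c i u) e : ℕ) : ℝ)| := by
        have hz : ((col (c i x) e : ℕ) : ℤ) - ((col (c i u) e : ℕ) : ℤ) ≠ 0 := by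
          intro h0
          apply he
          apply Fin.ext
          omega
        exact_mod_cast Int.one_le_abs hz
      nlinarith
    have := abs_sub_le (g i e x) (g i e y) (g i e u)
    simp only [Option.elim]
    linarith

/-! ### Summation over the scales -/

lemma doubling_growth (s : ℕ → ℝ) (hs0 : 16 ≤ s 0) (hs : ∀ j, s j ^ 3 ≤ s (j + 1)) :
    (∀ j, 16 ≤ s j) ∧ ∀ a i, 2 ^ i * s a ≤ s (a + i) := by
  have h16 : ∀ j, 16 ≤ s j := by
    intro j
    induction j with
    | zero => exact hs0
    | succ j ih => nlinarith [hs j, mul_self_nonneg (s j), pow_succ (s j) 2]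
  refine ⟨h16, fun a i => ?_⟩
  induction i with
  | zero => simp
  | succ i ih =>
    have h1 := h16 (a + i)
    have h2 := hs (a + i)
    rw [← add_assoc]
    have h3 : 2 * s (a + i) ≤ s (a + i) ^ 3 := by
      nlinarith [mul_self_nonneg (s (a + i)), pow_succ (s (a + i)) 2]
    rw [pow_succ]
    linarith

/-- The bounds `d / s j` are dominated by a geometric series of ratio `1 / 2`. -/
lemma tail_bound (s Δ : ℕ → ℝ) (hs0 : 16 ≤ s 0) (hs : ∀ j, s j ^ 3 ≤ s (j + 1)) {d : ℝ}
    (hd : 0 ≤ d) (h1 : ∀ j, |Δ j| ≤ d / s j) (a : ℕ) :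
    Summable (fun j => Δ (a + j)) ∧ |∑' j, Δ (a + j)| ≤ 2 * d / s a := by
  obtain ⟨h16, h2⟩ := doubling_growth s hs0 hs
  have hb : ∀ j, ‖Δ (a + j)‖ ≤ d / s a * (1 / 2) ^ j := by
    intro j
    refine (h1 (a + j)).trans ?_
    have h3 := h16 a
    rw [one_div, inv_pow, ← div_eq_mul_inv, div_div, mul_comm]
    exact div_le_div_of_nonneg_left hd (by positivity) (h2 a j)
  have hsum : HasSum (fun j : ℕ => d / s a * (1 / 2 : ℝ) ^ j) (2 * d / s a) := by
    have := hasSum_geometric_two.mul_left (d / s a)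
    rwa [div_mul_eq_mul_div, mul_comm d 2] at this
  exact ⟨Summable.of_norm_bounded hsum.summable hb, tsum_of_norm_bounded hsum hb⟩

/-- If the term at scale `s a` is at least `s a`, the other terms cannot cancel it: the earlier ones
contribute at most `s a / 4` and the later ones at most `1`. -/
lemma sum_separated (s Δ : ℕ → ℝ) (hs0 : 16 ≤ s 0) (hs : ∀ j, s j ^ 3 ≤ s (j + 1)) {d : ℝ}
    (hd : 0 ≤ d) (h1 : ∀ j, |Δ j| ≤ d / s j) (h2 : ∀ j, |Δ j| ≤ 2 * s j ^ 2) (a : ℕ)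
    (hda : 2 * d ≤ s (a + 1)) (ha : s a ≤ |Δ a|) : 3 ≤ |∑' j, Δ j| := by
  obtain ⟨h16, -⟩ := doubling_growth s hs0 hs
  have hlow : ∀ a, ∑ j ∈ Finset.range a, |Δ j| ≤ s a / 4 := by
    intro a
    induction a with
    | zero => simp; linarith
    | succ a ih =>
      rw [Finset.sum_range_succ]
      have e1 := h16 a
      have e2 := hs a
      have e3 := h2 a
      have e4 : 16 * s a ^ 2 ≤ s a ^ 3 := by rw [pow_succ (s a) 2, mul_comm]; gcongr
      nlinarith
  obtain ⟨-, htail⟩ := tail_bound s Δ hs0 hs hd h1 (a + 1)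
  have hsumm : Summable Δ := by simpa using (tail_bound s Δ hs0 hs hd h1 0).1
  have e1 := hsumm.sum_add_tsum_nat_add (a + 1)
  rw [Finset.sum_range_succ] at e1
  simp only [add_comm _ (a + 1)] at e1
  have e2 := (Finset.abs_sum_le_sum_abs Δ (Finset.range a)).trans (hlow a)
  have e3 : |∑' j, Δ (a + 1 + j)| ≤ 1 :=
    htail.trans ((div_le_one (by linarith [h16 (a + 1)])).2 hda)
  have e4 : |Δ a| ≤ |∑' j, Δ j| + |∑ j ∈ Finset.range a, Δ j| + |∑' j, Δ (a + 1 + j)| := by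
    have : Δ a = ∑' j, Δ j - ∑ j ∈ Finset.range a, Δ j - ∑' j, Δ (a + 1 + j) := by linarith
    rw [this]
    refine (abs_sub _ _).trans ?_
    gcongr
    exact abs_sub _ _
  linarith [h16 a]

/-- Finitely many 1-Lipschitz functions separating all pairs at distance at least `R₁`. -/
lemma exists_far_map {V : Type*} [MetricSpace V] [Nonempty V] (k R₀ : ℕ)
    (hfin : ∀ (x : V) (R : ℝ), (closedBall x R).Finite)
    (hgrowth : ∀ (x : V) (R : ℕ), R₀ ≤ R → (closedBall x (R : ℝ)).ncard ≤ R ^ k) :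
    ∃ (ι : Type) (_ : Fintype ι) (R₁ : ℕ) (G : ι → V → ℝ), R₀ ≤ R₁ ∧
      (∀ i x y, |G i x - G i y| ≤ dist x y) ∧
      ∀ x y, (R₁ : ℝ) ≤ dist x y → ∃ i, 3 ≤ |G i x - G i y| := by
  obtain ⟨t₀, ht₀⟩ := exists_threshold k R₀
  set b := max t₀ 16 with hb
  have hb16 : 16 ≤ b := le_max_right _ _
  let T : ℕ → ℕ := fun j => b ^ (7 ^ j)
  have hTb : ∀ j, b ≤ T j := fun j => Nat.le_self_pow (by positivity) b
  have hTs : ∀ j, T (j + 1) = T j ^ 7 := fun j => by simp only [T]; rw [← pow_mul, pow_succ]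
  have hT : ∀ j, t₀ ≤ T j := fun j => (le_max_left _ _).trans (hTb j)
  choose F hF1 hF2 hF3 using fun j => exists_scale_map k R₀ hfin hgrowth (T j)
    (ht₀ _ (hT j)).1 (ht₀ _ (hT j)).2.1 (ht₀ _ (hT j)).2.2
  have hT16 : ∀ j, (16 : ℝ) ≤ T j := fun j => by exact_mod_cast hb16.trans (hTb j)
  have hTsR : ∀ j, (T (j + 1) : ℝ) = (T j : ℝ) ^ 7 := fun j => by rw [hTs]; push_cast; rfl
  obtain ⟨o⟩ := ‹Nonempty V›
  -- `π` is the parity of the scales summed in a coordinate: the scale following that of a pair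
  -- would not be negligible, but the one after it is.
  let s : Fin 2 → ℕ → ℝ := fun π j => T (2 * j + π)
  have hs0 : ∀ π, 16 ≤ s π 0 := fun π => hT16 _
  have hs : ∀ π j, s π j ^ 3 ≤ s π (j + 1) := by
    intro π j
    simp only [s]
    rw [show 2 * (j + 1) + (π : ℕ) = 2 * j + π + 1 + 1 by ring, hTsR, hTsR, ← pow_mul]
    exact pow_le_pow_right₀ (by linarith [hT16 (2 * j + π)]) (by norm_num)
  let Δ : Fin 2 → Fin (6 * k + 1) × Option (Fin (43 * k)) → V → V → ℕ → ℝ :=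
    fun π p x y j => F (2 * j + π) p x - F (2 * j + π) p y
  have hΔ1 : ∀ π p x y j, |Δ π p x y j| ≤ dist x y / s π j := fun π p x y j => hF1 _ p x y
  have hsummable : ∀ π p x y, Summable (Δ π p x y) := fun π p x y => by
    simpa using (tail_bound _ _ (hs0 π) (hs π) dist_nonneg (hΔ1 π p x y) 0).1
  -- Subtracting the value at the base point `o` makes the series converge.
  let G : Fin 2 × Fin (6 * k + 1) × Option (Fin (43 * k)) → V → ℝ :=
    fun q x => ∑' j, Δ q.1 q.2 x o j
  have hG : ∀ q x y, G q x - G q y = ∑' j, Δ q.1 q.2 x y j := by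
    intro q x y
    simp only [G]
    rw [← (hsummable _ _ x o).tsum_sub (hsummable _ _ y o)]
    congr 1
    funext j
    simp only [Δ]
    ring
  refine ⟨_, inferInstance, max R₀ (b ^ 6), G, le_max_left _ _, fun q x y => ?_, fun x y hxy => ?_⟩
  · rw [hG]
    have h := (tail_bound _ _ (hs0 q.1) (hs q.1) dist_nonneg (hΔ1 q.1 q.2 x y) 0).2
    simp only [zero_add] at h
    refine h.trans ?_
    rw [div_le_iff₀ (by linarith [hs0 q.1])]
    nlinarith [hs0 q.1, dist_nonneg (x := x) (y := y)]
  · have hex : ∃ j, dist x y < (T (j + 1) : ℝ) ^ 6 := by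
      obtain ⟨n, hn⟩ := exists_nat_gt (dist x y)
      refine ⟨n, hn.trans_le ?_⟩
      have h1 : n ≤ T (n + 1) := by
        have h2 : n + 1 < 7 ^ (n + 1) := Nat.lt_pow_self (by norm_num)
        have h3 : 7 ^ (n + 1) < b ^ (7 ^ (n + 1)) := Nat.lt_pow_self (by omega)
        simp only [T]; omega
      exact_mod_cast h1.trans (Nat.le_self_pow (by norm_num) _)
    classical
    -- the scale to which the pair belongs
    obtain ⟨J, hJ, hJmin⟩ : ∃ J, dist x y < (T (J + 1) : ℝ) ^ 6 ∧ (T J : ℝ) ^ 6 ≤ dist x y := by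
      refine ⟨Nat.find hex, Nat.find_spec hex, ?_⟩
      rcases Nat.eq_zero_or_pos (Nat.find hex) with h0 | h0
      · rw [h0]
        have : (T 0 : ℝ) ^ 6 = ((b ^ 6 : ℕ) : ℝ) := by simp [T]
        rw [this]
        exact le_trans (by exact_mod_cast le_max_right _ _) hxy
      · have := Nat.find_min hex (m := Nat.find hex - 1) (by omega)
        rw [show Nat.find hex - Nat.succ 0 + 1 = Nat.find hex from Nat.sub_add_cancel h0] at this
        exact not_lt.1 this
    obtain ⟨p, hp⟩ := hF3 J x y hJmin (by
      rw [hTsR, ← pow_mul] at hJ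
      exact hJ.le)
    have hJ2 : 2 * (J / 2) + J % 2 = J := by omega
    refine ⟨(⟨J % 2, Nat.mod_lt _ (by norm_num)⟩, p), ?_⟩
    rw [hG]
    refine sum_separated _ _ (hs0 _) (hs _) dist_nonneg (hΔ1 _ _ x y) (fun j => hF2 _ p x y)
      (J / 2) ?_ ?_
    · simp only [s]
      rw [show 2 * (J / 2 + 1) + J % 2 = J + 1 + 1 by omega, hTsR]
      have h1 := hT16 (J + 1)
      have h2 : (0 : ℝ) < (T (J + 1) : ℝ) ^ 6 := by positivity
      rw [pow_succ (T (J + 1) : ℝ) 6]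
      nlinarith
    · simp only [s, Δ, hJ2]
      exact hp

/-! ### Convex hulls and the embedding -/

lemma abs_coord_le_of_mem_hull {V : Type*} {d : ℕ} (Φ : V → EuclideanSpace ℝ (Fin d))
    (i : Fin d) (A : Set V) (a r : ℝ) (h : ∀ v ∈ A, |Φ v i - a| ≤ r) :
    ∀ x ∈ convexHull ℝ (Φ '' A), |x i - a| ≤ r := by
  have hconv : Convex ℝ {x : EuclideanSpace ℝ (Fin d) | |x i - a| ≤ r} := by
    have := (convex_Icc (a - r) (a + r)).is_linear_preimage (𝕜 := ℝ)
      (f := fun x : EuclideanSpace ℝ (Fin d) => x i) ⟨fun _ _ => rfl, fun _ _ => by simp⟩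
    have heq : {x : EuclideanSpace ℝ (Fin d) | |x i - a| ≤ r} =
        (fun x : EuclideanSpace ℝ (Fin d) => x i) ⁻¹' Set.Icc (a - r) (a + r) := by
      ext x
      simp only [Set.mem_ofPred_eq, Set.mem_preimage, Set.mem_Icc, abs_le]
      constructor <;> rintro ⟨h1, h2⟩ <;> constructor <;> linarith
    rwa [heq]
  intro x hx
  exact convexHull_min (by rintro _ ⟨v, hv, rfl⟩; exact h v hv) hconv hx

lemma sum_coord_eq_of_mem_hull {V : Type*} {d : ℕ} (Φ : V → EuclideanSpace ℝ (Fin d))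
    {κ : Type*} (C : Finset κ) (e : κ → Fin d) (A : Set V) (a : ℝ)
    (h : ∀ v ∈ A, ∑ c ∈ C, Φ v (e c) = a) :
    ∀ x ∈ convexHull ℝ (Φ '' A), ∑ c ∈ C, x (e c) = a := by
  have hconv : Convex ℝ {x : EuclideanSpace ℝ (Fin d) | ∑ c ∈ C, x (e c) = a} := by
    refine (convex_singleton a).is_linear_preimage
      (f := fun x : EuclideanSpace ℝ (Fin d) => ∑ c ∈ C, x (e c)) ⟨fun x y => ?_, fun r x => ?_⟩
    · simp [Finset.sum_add_distrib]
    · simp [Finset.mul_sum]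
  intro x hx
  exact convexHull_min (by rintro _ ⟨v, hv, rfl⟩; exact h v hv) hconv hx

/-- The metric form of the theorem, with sets of diameter at most `1` in place of cliques. -/
lemma exists_embedding {V : Type*} [MetricSpace V] [Nonempty V] (k R₀ : ℕ)
    (hfin : ∀ (x : V) (R : ℝ), (closedBall x R).Finite)
    (hgrowth : ∀ (x : V) (R : ℕ), R₀ ≤ R → (closedBall x (R : ℝ)).ncard ≤ R ^ k) :
    ∃ (ρ : ℝ), 0 < ρ ∧ ∃ (d : ℕ), 0 < d ∧ ∃ Φ : V → EuclideanSpace ℝ (Fin d),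
      (∀ v w : V, dist v w ≤ 1 → dist (Φ v) (Φ w) ≤ ρ) ∧
      (∀ Vs Ws : Set V, (∀ v ∈ Vs, ∀ v' ∈ Vs, dist v v' ≤ 1) →
        (∀ w ∈ Ws, ∀ w' ∈ Ws, dist w w' ≤ 1) → Disjoint Vs Ws →
        ∀ x ∈ convexHull ℝ (Φ '' Vs), ∀ y ∈ convexHull ℝ (Φ '' Ws), 1 ≤ dist x y) := by
  classical
  obtain ⟨ι, _, R₁, G, hR₁, hG1, hG2⟩ := exists_far_map k R₀ hfin hgrowth
  set K := (R₁ + 2) ^ k with hK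
  obtain ⟨col, hcol⟩ := exists_coloring (V := V) (α := Fin K) ((R₁ + 2 : ℕ) : ℝ) (by positivity)
    (fun x => ⟨hfin _ _, by simpa [hK] using hgrowth x (R₁ + 2) (by omega)⟩)
  have hK0 : 0 < K := by positivity
  let e := Fintype.equivFin (ι ⊕ Fin K)
  let Ψ : ι ⊕ Fin K → V → ℝ := Sum.elim G (fun c v => if col v = c then (K : ℝ) else 0)
  let Φ : V → EuclideanSpace ℝ (Fin (Fintype.card (ι ⊕ Fin K))) :=
    fun v => WithLp.toLp 2 (fun i => Ψ (e.symm i) v)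
  have hΦ : ∀ v q, Φ v (e q) = Ψ q v := fun v q => by simp [Φ]
  have hcoord : ∀ (x y : EuclideanSpace ℝ (Fin (Fintype.card (ι ⊕ Fin K)))) i,
      |x i - y i| ≤ dist x y := by
    intro x y i
    rw [dist_eq_norm]
    exact PiLp.norm_apply_le (x - y) i
  refine ⟨√(∑ _i : Fin (Fintype.card (ι ⊕ Fin K)), ((K : ℝ) + 1) ^ 2) + 1, by positivity, _,
    Fintype.card_pos_iff.2 ⟨Sum.inr ⟨0, hK0⟩⟩, Φ, fun v w hvw => ?_, ?_⟩
  · rw [EuclideanSpace.dist_eq]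
    refine le_add_of_le_of_nonneg (Real.sqrt_le_sqrt (Finset.sum_le_sum fun i _ => ?_)) zero_le_one
    gcongr
    obtain ⟨q, rfl⟩ := e.surjective i
    rw [hΦ, hΦ, Real.dist_eq]
    rcases q with q | c
    · have := hG1 q v w
      simp only [Ψ, Sum.elim_inl]
      have : (0 : ℝ) ≤ K := by positivity
      linarith
    · simp only [Ψ, Sum.elim_inr]
      have : (0 : ℝ) ≤ K := by positivity
      split_ifs <;> simp <;> linarith
  intro Vs Ws hV hW hdisj x hx y hy
  obtain ⟨_, v, hv, rfl⟩ := convexHull_nonempty_iff.1 ⟨x, hx⟩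
  obtain ⟨_, w, hw, rfl⟩ := convexHull_nonempty_iff.1 ⟨y, hy⟩
  -- If `v` and `w` are far apart, one far coordinate separates the hulls; otherwise all colours differ.
  by_cases hvw : (R₁ : ℝ) ≤ dist v w
  · obtain ⟨i, hi⟩ := hG2 v w hvw
    have hx1 := abs_coord_le_of_mem_hull Φ (e (Sum.inl i)) Vs (G i v) 1 (fun v' hv' => by
      rw [hΦ]; exact (hG1 i v' v).trans (hV v' hv' v hv)) x hx
    have hy1 := abs_coord_le_of_mem_hull Φ (e (Sum.inl i)) Ws (G i w) 1 (fun w' hw' => by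
      rw [hΦ]; exact (hG1 i w' w).trans (hW w' hw' w hw)) y hy
    refine le_trans ?_ (hcoord x y (e (Sum.inl i)))
    have h1 := abs_sub_le (G i v) (x (e (Sum.inl i))) (G i w)
    have h2 := abs_sub_le (x (e (Sum.inl i))) (y (e (Sum.inl i))) (G i w)
    rw [abs_sub_comm] at hx1
    linarith
  · push Not at hvw
    have hne : ∀ v' ∈ Vs, ∀ w' ∈ Ws, col v' ≠ col w' := by
      intro v' hv' w' hw'
      refine hcol v' w' (fun h => Set.disjoint_left.1 hdisj hv' (h ▸ hw')) ?_
      have h1 := dist_triangle4 v' v w w'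
      have h2 := hV v' hv' v hv
      have h3 := hW w hw w' hw'
      push_cast
      linarith
    let C : Finset (Fin K) := Finset.univ.filter (fun c => ∃ v' ∈ Vs, col v' = c)
    have hxs := sum_coord_eq_of_mem_hull Φ C (fun c => e (Sum.inr c)) Vs K (fun v' hv' => by
      have : col v' ∈ C := by simp only [C, Finset.mem_filter_univ]; exact ⟨v', hv', rfl⟩
      simp [hΦ, Ψ, this]) x hx
    have hys : ∀ c ∈ C, y (e (Sum.inr c)) = 0 := by
      intro c hc
      obtain ⟨v', hv', rfl⟩ := (Finset.mem_filter.1 hc).2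
      have := abs_coord_le_of_mem_hull Φ (e (Sum.inr (col v'))) Ws 0 0 (fun w' hw' => by
        simp [hΦ, Ψ, (hne v' hv' w' hw').symm]) y hy
      simpa using this
    have hCne : C.Nonempty := ⟨col v, by simp only [C, Finset.mem_filter_univ]; exact ⟨v, hv, rfl⟩⟩
    -- The coordinates in `C` add up to `K ≥ C.card`, so one of them is at least `1`.
    have hsum : ∑ c ∈ C, (1 : ℝ) ≤ ∑ c ∈ C, x (e (Sum.inr c)) := by
      rw [hxs]
      simpa using (Finset.card_le_univ C)
    obtain ⟨c, hc, hc1⟩ := Finset.exists_le_of_sum_le hCne hsum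
    refine le_trans ?_ (hcoord x y (e (Sum.inr c)))
    rw [hys c hc, sub_zero]
    exact hc1.trans (le_abs_self _)

lemma polynomial_eval_le_pow (p : Polynomial ℝ) :
    ∃ k R₀ : ℕ, ∀ R : ℕ, R₀ ≤ R → p.eval (R : ℝ) ≤ (R : ℝ) ^ k := by
  have hlim := Polynomial.div_tendsto_atTop_zero_of_degree_lt (𝕜 := ℝ) p
    (Polynomial.X ^ (p.natDegree + 1)) (by
      rw [Polynomial.degree_X_pow]
      exact p.degree_le_natDegree.trans_lt (by exact_mod_cast Nat.lt_succ_self _))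
  have h := ((hlim.eventually_le_const one_pos).natCast_atTop).and (Filter.eventually_ge_atTop 1)
  obtain ⟨R₀, hR⟩ := Filter.eventually_atTop.1 h
  refine ⟨p.natDegree + 1, R₀, fun R hRR => ?_⟩
  obtain ⟨h1, h2⟩ := hR R hRR
  have h3 : (0 : ℝ) < R := by exact_mod_cast h2
  rw [Polynomial.eval_pow, Polynomial.eval_X] at h1
  exact (div_le_one (by positivity)).1 h1

theorem stmt_4 {V : Type*} (Γ : SimpleGraph V) (hconn : Γ.Connected)
    (hgrowth : HasUniformPolyGrowth Γ) :
    ∃ (ρ : ℝ), 0 < ρ ∧ ∃ (d : ℕ), 0 < d ∧ ∃ Φ : V → EuclideanSpace ℝ (Fin d),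
      (∀ v w : V, Γ.Adj v w → dist (Φ v) (Φ w) ≤ ρ) ∧
      (∀ Vs Ws : Set V, Γ.IsClique Vs → Γ.IsClique Ws → Disjoint Vs Ws →
        ∀ x ∈ convexHull ℝ (Φ '' Vs), ∀ y ∈ convexHull ℝ (Φ '' Ws), 1 ≤ dist x y) := by
  obtain ⟨p, hp⟩ := hgrowth
  obtain ⟨k, R₀, hk⟩ := polynomial_eval_le_pow p
  let _ : MetricSpace V :=
    { dist := fun x y => (Γ.dist x y : ℝ)
      dist_self := fun x => by simp
      dist_comm := fun x y => by rw [Γ.dist_comm]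
      dist_triangle := fun x y z => by exact_mod_cast hconn.dist_triangle
      eq_of_dist_eq_zero := fun {x y} h => hconn.dist_eq_zero_iff.1 (by exact_mod_cast h) }
  have hdist : ∀ x y : V, dist x y = (Γ.dist x y : ℝ) := fun _ _ => rfl
  have hball : ∀ (x : V) (R : ℕ),
      closedBall x (R : ℝ) = {y : V | Γ.Reachable x y ∧ Γ.dist x y ≤ R} := by
    intro x R
    ext y
    simp only [mem_closedBall, Set.mem_ofPred_eq, hconn.preconnected x y, true_and]
    rw [dist_comm, hdist, Nat.cast_le]
  have hfin : ∀ (x : V) (R : ℝ), (closedBall x R).Finite := fun x R =>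
    ((hball x ⌈R⌉₊).symm ▸ (hp x ⌈R⌉₊).1 :
      (closedBall x (⌈R⌉₊ : ℝ)).Finite).subset (closedBall_subset_closedBall (Nat.le_ceil R))
  have hgr : ∀ (x : V) (R : ℕ), R₀ ≤ R → (closedBall x (R : ℝ)).ncard ≤ R ^ k := by
    intro x R hR
    rw [hball]
    exact_mod_cast (hp x R).2.trans (hk R hR)
  have := hconn.nonempty
  obtain ⟨ρ, hρ, d, hd, Φ, h1, h2⟩ := exists_embedding k R₀ hfin hgr
  have hadj : ∀ v w, Γ.Adj v w → dist v w ≤ 1 := fun v w h => by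
    rw [hdist, SimpleGraph.dist_eq_one_iff_adj.2 h, Nat.cast_one]
  have hcl : ∀ S : Set V, Γ.IsClique S → ∀ v ∈ S, ∀ w ∈ S, dist v w ≤ 1 := by
    intro S hS v hv w hw
    rcases eq_or_ne v w with rfl | hne
    · rw [dist_self]; exact zero_le_one
    · exact hadj v w (hS hv hw hne)
  exact ⟨ρ, hρ, d, hd, Φ, fun v w h => h1 v w (hadj v w h),
    fun Vs Ws hV hW => h2 Vs Ws (hcl Vs hV) (hcl Ws hW)⟩
end

section
/- Let Γ be a connected graph of bounded degree (there is D such that every vertex of Γ has at most D neighbors). Then there exists a connected graph Δ on a countably infinite vertex set, with every vertex of degree at most 3, such that for every constant K there is no map f from the vertex set of Δ to the vertex set of Γ satisfying both: (i) |f⁻¹(h)| ≤ K for every vertex h of Γ; and (ii) dist_Γ(f(v), f(w)) ≤ K for any two adjacent vertices v, w of Δ. -/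
/-!
The graph `Δ` is the ray `0 - 1 - 2 - ⋯` on `ℕ` together with, for every `n`, a perfect matching
between the intervals `[2m, 3m)` and `[3m, 4m)`, where `m = 2 ^ n`, given by a permutation `σ n`
of `Fin m`. These intervals are disjoint for different `n`, so all degrees are at most 3
(`rayGraph_degree`).

Fix `K` and the image `h` of the vertex `0`. Balls of radius `K` in `Γ` have at most `B` elements
(`exists_ball_bound`), so there are at most `B ^ (4m)` ways to map the initial segment of the ray
of length `4m` with consecutive vertices at distance at most `K`. Once such a map `f` with fibers
of size at most `K` is fixed, a matched partner of a given vertex is one of at most `B * K`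
vertices, so `f` is compatible with at most `(B * K) ^ m` permutations. Hence at most
`B ^ (4m) * (B * K) ^ m` permutations are compatible with some `f`, which is less than `m!` for
large `m`; some permutation therefore excludes all maps with data `(K, h)`
(`exists_obstructing_perm`). As `Γ` is countable, the pairs `(K, h)` can be enumerated so that each
occurs infinitely often, and `σ n` is chosen to exclude the `n`-th pair whenever that is possible.
-/

/-- The pairs of vertices joined by the matchings: `2m + i` is matched with `3m + σ n i`, where
`m = 2 ^ n` and `i < m`. -/
def Matched (σ : ∀ n : ℕ, Equiv.Perm (Fin (2 ^ n))) (a b : ℕ) : Prop :=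
  ∃ (n : ℕ) (i : Fin (2 ^ n)), a = 2 * 2 ^ n + i ∧ b = 3 * 2 ^ n + σ n i

/-- The ray on `ℕ` together with the matchings given by `σ`. -/
def rayGraph (σ : ∀ n : ℕ, Equiv.Perm (Fin (2 ^ n))) : SimpleGraph ℕ :=
  SimpleGraph.fromRel fun a b => b = a + 1 ∨ Matched σ a b

lemma rayGraph_adj_succ (σ : ∀ n : ℕ, Equiv.Perm (Fin (2 ^ n))) (k : ℕ) :
    (rayGraph σ).Adj k (k + 1) := by
  simp [rayGraph]

lemma rayGraph_adj_matched (σ : ∀ n : ℕ, Equiv.Perm (Fin (2 ^ n))) (n : ℕ) (i : Fin (2 ^ n)) :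
    (rayGraph σ).Adj (2 * 2 ^ n + i) (3 * 2 ^ n + σ n i) := by
  rw [rayGraph, SimpleGraph.fromRel_adj]
  refine ⟨?_, Or.inl (Or.inr ⟨n, i, rfl, rfl⟩)⟩
  have := i.isLt
  omega

lemma rayGraph_connected (σ : ∀ n : ℕ, Equiv.Perm (Fin (2 ^ n))) : (rayGraph σ).Connected := by
  have h0 : ∀ k, (rayGraph σ).Reachable 0 k := by
    intro k
    induction k with
    | zero => exact SimpleGraph.Reachable.refl _
    | succ k ih => exact ih.trans (rayGraph_adj_succ σ k).reachable
  exact { preconnected := fun a b => (h0 a).symm.trans (h0 b) }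

/-- The dyadic interval containing a number is unique. -/
lemma dyadic_unique {n n' v : ℕ} (h1 : 2 * 2 ^ n ≤ v) (h2 : v < 4 * 2 ^ n)
    (h1' : 2 * 2 ^ n' ≤ v) (h2' : v < 4 * 2 ^ n') : n = n' := by
  have a : Nat.log 2 v = n + 1 :=
    Nat.log_eq_of_pow_le_of_lt_pow (by rw [pow_succ]; omega) (by rw [pow_succ, pow_succ]; omega)
  have b : Nat.log 2 v = n' + 1 :=
    Nat.log_eq_of_pow_le_of_lt_pow (by rw [pow_succ]; omega) (by rw [pow_succ, pow_succ]; omega)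
  omega

/-- Every vertex has at most one matched partner. -/
lemma matched_subsingleton (σ : ∀ n : ℕ, Equiv.Perm (Fin (2 ^ n))) (v : ℕ) :
    {w : ℕ | Matched σ v w ∨ Matched σ w v}.Subsingleton := by
  rintro w hw w' hw'
  rcases hw with ⟨n, i, h1, h2⟩ | ⟨n, i, h1, h2⟩ <;>
  rcases hw' with ⟨n', i', h1', h2'⟩ | ⟨n', i', h1', h2'⟩ <;>
  · have a := i.isLt
    have a' := i'.isLt
    have b := (σ n i).isLt
    have b' := (σ n' i').isLt
    obtain rfl : n = n' := dyadic_unique (v := v) (by omega) (by omega) (by omega) (by omega)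
    first
    | omega
    | have hi : i = i' := by
        first
        | apply Fin.ext
          omega
        | apply (σ n).injective
          apply Fin.ext
          omega
      subst hi
      omega

lemma rayGraph_degree (σ : ∀ n : ℕ, Equiv.Perm (Fin (2 ^ n))) (v : ℕ) :
    {w : ℕ | (rayGraph σ).Adj v w}.Finite ∧ {w : ℕ | (rayGraph σ).Adj v w}.ncard ≤ 3 := by
  obtain ⟨p, hp⟩ : ∃ p, ∀ w, Matched σ v w ∨ Matched σ w v → w = p := by
    rcases (matched_subsingleton σ v).eq_empty_or_singleton with h | ⟨p, h⟩
    · exact ⟨0, fun w hw => ((Set.ext_iff.1 h w).1 hw).elim⟩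
    · exact ⟨p, fun w hw => (Set.ext_iff.1 h w).1 hw⟩
  have hsub : {w : ℕ | (rayGraph σ).Adj v w} ⊆ (({v + 1, v - 1, p} : Finset ℕ) : Set ℕ) := by
    intro w hw
    rw [Set.mem_ofPred_eq, rayGraph, SimpleGraph.fromRel_adj] at hw
    simp only [Finset.coe_insert, Finset.coe_singleton, Set.mem_insert_iff,
      Set.mem_singleton_iff]
    rcases hw with ⟨-, (h | h) | (h | h)⟩
    · exact Or.inl h
    · exact Or.inr (Or.inr (hp w (Or.inl h)))
    · exact Or.inr (Or.inl (by omega))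
    · exact Or.inr (Or.inr (hp w (Or.inr h)))
  refine ⟨(Finset.finite_toSet _).subset hsub, ?_⟩
  refine (Set.ncard_le_ncard hsub (Finset.finite_toSet _)).trans ?_
  rw [Set.ncard_coe_finset]
  exact Finset.card_le_three

/-- In a connected graph of bounded degree, balls of radius `K` have uniformly bounded size. -/
lemma exists_ball_bound {V : Type*} (Γ : SimpleGraph V) (hconn : Γ.Connected)
    (D : ℕ) (hdeg : ∀ v : V, {w : V | Γ.Adj v w}.Finite ∧ {w : V | Γ.Adj v w}.ncard ≤ D) (K : ℕ) :
    ∃ B : ℕ, ∀ v : V, ∃ s : Finset V, s.card ≤ B ∧ ∀ w, Γ.dist v w ≤ K → w ∈ s := by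
  classical
  induction K with
  | zero =>
    refine ⟨1, fun v => ⟨{v}, by simp, fun w hw => ?_⟩⟩
    have := hconn.dist_eq_zero_iff.1 (Nat.le_zero.1 hw)
    simp [this]
  | succ K ih =>
    obtain ⟨B, hB⟩ := ih
    choose s hs hmem using hB
    refine ⟨D * B + 1, fun v => ⟨insert v ((hdeg v).1.toFinset.biUnion s), ?_, fun w hw => ?_⟩⟩
    · refine (Finset.card_insert_le _ _).trans (Nat.succ_le_succ ?_)
      refine (Finset.card_biUnion_le_card_mul _ _ B fun u _ => hs u).trans ?_
      refine Nat.mul_le_mul_right _ ?_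
      rw [← Set.ncard_eq_toFinset_card _ (hdeg v).1]
      exact (hdeg v).2
    · obtain ⟨p, hp⟩ := hconn.exists_walk_length_eq_dist v w
      cases p with
      | nil => simp
      | @cons _ u _ hvu q =>
        rw [SimpleGraph.Walk.length_cons] at hp
        refine Finset.mem_insert_of_mem (Finset.mem_biUnion.2 ⟨u, by simpa using hvu, ?_⟩)
        refine hmem u w ((SimpleGraph.dist_le q).trans ?_)
        omega

/-- The path in `V` starting at `h` whose `k`-th step follows the instruction `c k`. -/
def codedPath {V : Type*} (nxt : V → ℕ → V) (h : V) (c : ℕ → ℕ) : ℕ → V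
  | 0 => h
  | k + 1 => nxt (codedPath nxt h c k) (c k)

/-- Any list of at most `B` elements can be indexed by the numbers below `B`. -/
lemma exists_index {V : Type*} (v : V) (s : Finset V) (B : ℕ) (hs : s.card ≤ B) :
    ∃ g : ℕ → V, ∀ w ∈ s, ∃ k < B, g k = w := by
  refine ⟨fun k => s.toList.getD k v, fun w hw => ?_⟩
  obtain ⟨k, hk, rfl⟩ := List.getElem_of_mem (Finset.mem_toList.2 hw)
  refine ⟨k, ?_, List.getD_eq_getElem _ _ hk⟩
  rw [Finset.length_toList] at hk
  omega

/-- The counting argument. The relation `R` stands for `dist ≤ K` in `Γ`; the permutations that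
are compatible with some map `f` starting at `h` are fewer than `m !`. -/
lemma exists_obstructing_perm {V : Type*} (R : V → V → Prop) (B K m : ℕ)
    (hB : ∀ v : V, ∃ s : Finset V, s.card ≤ B ∧ ∀ w, R v w → w ∈ s)
    (hm : (B ^ 5 * K) ^ m < m.factorial) (h : V) :
    ∃ σ : Equiv.Perm (Fin m), ∀ f : ℕ → V, f 0 = h → (∀ k, R (f k) (f (k + 1))) →
      (∀ w : V, {v : ℕ | f v = w}.Finite ∧ {v : ℕ | f v = w}.ncard ≤ K) →
      ∃ i : Fin m, ¬ R (f (2 * m + i)) (f (3 * m + σ i)) := by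
  classical
  by_contra! hcon
  choose s hs hmem using hB
  choose nxt hnxt using fun v => exists_index v (s v) B (hs v)
  let ext : (Fin (4 * m) → Fin B) → ℕ → ℕ := fun c k => if hk : k < 4 * m then c ⟨k, hk⟩ else 0
  let g : (Fin (4 * m) → Fin B) → ℕ → V := fun c => codedPath nxt h (ext c)
  -- the permutations compatible with the path coded by `c`, if its fibers are small
  let T : (Fin (4 * m) → Fin B) → Finset (Equiv.Perm (Fin m)) := fun c =>
    Finset.univ.filter fun σ =>
      (∀ w, (Finset.univ.filter fun j : Fin m => g c (3 * m + j) = w).card ≤ K) ∧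
        ∀ i : Fin m, R (g c (2 * m + i)) (g c (3 * m + σ i))
  have hT : ∀ c, (T c).card ≤ (B * K) ^ m := by
    intro c
    by_cases hfib : ∀ w, (Finset.univ.filter fun j : Fin m => g c (3 * m + j) = w).card ≤ K
    · let A : Fin m → Finset (Fin m) := fun i =>
        (s (g c (2 * m + i))).biUnion fun w => Finset.univ.filter fun j => g c (3 * m + j) = w
      have hA : ∀ i, (A i).card ≤ B * K := fun i =>
        (Finset.card_biUnion_le_card_mul _ _ K fun w _ => hfib w).trans
          (Nat.mul_le_mul_right _ (hs _))
      calc (T c).card ≤ (Fintype.piFinset A).card := by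
            refine Finset.card_le_card_of_injOn (fun σ => ⇑σ) ?_ DFunLike.coe_injective.injOn
            intro σ hσ
            have hσ' := (Finset.mem_filter.1 (Finset.mem_coe.1 hσ)).2.2
            refine Finset.mem_coe.2 (Fintype.mem_piFinset.2 fun i => ?_)
            exact Finset.mem_biUnion.2 ⟨_, hmem _ _ (hσ' i), by simp⟩
        _ = ∏ i, (A i).card := Fintype.card_piFinset _
        _ ≤ ∏ _i : Fin m, B * K := Finset.prod_le_prod' fun i _ => hA i
        _ = (B * K) ^ m := by simp
    · have : T c = ∅ := Finset.filter_eq_empty_iff.2 fun σ _ hσ => hfib hσ.1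
      simp [this]
  have hcover : (Finset.univ : Finset (Equiv.Perm (Fin m))) ⊆ Finset.univ.biUnion T := by
    intro σ _
    obtain ⟨f, hf0, hfR, hfib, hfσ⟩ := hcon σ
    choose c hcB hc using fun k => hnxt (f k) (f (k + 1)) (hmem _ _ (hfR k))
    let c' : Fin (4 * m) → Fin B := fun k => ⟨c k, hcB k⟩
    have hg : ∀ k, k ≤ 4 * m → g c' k = f k := by
      intro k
      induction k with
      | zero => exact fun _ => hf0.symm
      | succ k ih =>
        intro hk
        have hk' : k < 4 * m := by omega
        have h1 : ext c' k = c k := by simp [ext, c', hk']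
        have h2 : g c' (k + 1) = nxt (g c' k) (ext c' k) := rfl
        rw [h2, h1, ih hk'.le, hc]
    have hg3 : ∀ j : Fin m, g c' (3 * m + j) = f (3 * m + j) := fun j => hg _ (by omega)
    refine Finset.mem_biUnion.2 ⟨c', Finset.mem_univ _, Finset.mem_filter.2
      ⟨Finset.mem_univ _, fun w => ?_, fun i => ?_⟩⟩
    · refine le_trans ?_ (hfib w).2
      rw [Set.ncard_eq_toFinset_card _ (hfib w).1]
      refine Finset.card_le_card_of_injOn (fun j => 3 * m + j) ?_ ?_
      · intro j hj
        simpa [hg3] using hj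
      · intro j _ j' _ hjj
        have : 3 * m + (j : ℕ) = 3 * m + j' := hjj
        exact Fin.ext (by omega)
    · rw [hg3, hg _ (by omega)]
      exact hfσ i
  have hle := (Finset.card_le_card hcover).trans
    (Finset.card_biUnion_le_card_mul _ _ _ fun c _ => hT c)
  rw [Finset.card_univ, Fintype.card_perm, Fintype.card_fin, Finset.card_univ, Fintype.card_fun,
    Fintype.card_fin, Fintype.card_fin] at hle
  have heq : B ^ (4 * m) * (B * K) ^ m = (B ^ 5 * K) ^ m := by
    rw [pow_mul, ← mul_pow]
    ring
  omega

lemma exists_pow_lt_factorial (C : ℕ) : ∃ N, ∀ m ≥ N, C ^ m < m.factorial := by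
  have h := FloorSemiring.tendsto_pow_div_factorial_atTop (C : ℝ)
  obtain ⟨N, hN⟩ := Filter.eventually_atTop.1 (h.eventually (gt_mem_nhds one_pos))
  refine ⟨N, fun m hm => ?_⟩
  have := hN m hm
  rw [div_lt_one (by positivity)] at this
  exact_mod_cast this

/-- for every connected graph `Γ` of bounded degree there is a connected graph
`Δ` on a countably infinite vertex set (here `ℕ`) with all degrees at most 3 such that for no
constant `K` is there a map `f` from the vertices of `Δ` to those of `Γ` with
(i) every fiber of `f` of size at most `K`, and
(ii) `dist_Γ(f v, f w) ≤ K` whenever `v, w` are adjacent in `Δ`. -/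
theorem stmt_13 {V : Type*} (Γ : SimpleGraph V) (hconn : Γ.Connected)
    (D : ℕ) (hdeg : ∀ v : V, {w : V | Γ.Adj v w}.Finite ∧ {w : V | Γ.Adj v w}.ncard ≤ D) :
    ∃ Δ : SimpleGraph ℕ, Δ.Connected ∧
      (∀ v : ℕ, {w : ℕ | Δ.Adj v w}.Finite ∧ {w : ℕ | Δ.Adj v w}.ncard ≤ 3) ∧
      ∀ (K : ℕ) (f : ℕ → V),
        ¬ ((∀ h : V, {v : ℕ | f v = h}.Finite ∧ {v : ℕ | f v = h}.ncard ≤ K) ∧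
           (∀ v w : ℕ, Δ.Adj v w → Γ.dist (f v) (f w) ≤ K)) := by
  classical
  choose B hB using exists_ball_bound Γ hconn D hdeg
  obtain ⟨v₀⟩ := hconn.nonempty
  -- `V` is the union of the finite balls around `v₀`
  have hcount : Countable V := by
    choose s _ hs using fun K => hB K v₀
    refine Set.countable_univ_iff.1
      ((Set.countable_iUnion fun K => (s K).countable_toSet).mono fun w _ => ?_)
    exact Set.mem_iUnion.2 ⟨_, hs _ w le_rfl⟩
  have : Nonempty V := ⟨v₀⟩
  obtain ⟨e, he⟩ := exists_surjective_nat V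
  let Good : ∀ n : ℕ, ℕ → V → Equiv.Perm (Fin (2 ^ n)) → Prop := fun n K h σ =>
    ∀ f : ℕ → V, f 0 = h → (∀ k, Γ.dist (f k) (f (k + 1)) ≤ K) →
      (∀ w : V, {v : ℕ | f v = w}.Finite ∧ {v : ℕ | f v = w}.ncard ≤ K) →
      ∃ i : Fin (2 ^ n), ¬ Γ.dist (f (2 * 2 ^ n + i)) (f (3 * 2 ^ n + σ i)) ≤ K
  -- the `n`-th pair `(K, h)` for `n = pair (pair K j) b` is `(K, e j)`; varying `b` makes every
  -- pair occur for arbitrarily large `n`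
  have hchoose : ∀ n : ℕ, ∃ σ : Equiv.Perm (Fin (2 ^ n)),
      (∃ τ, Good n n.unpair.1.unpair.1 (e n.unpair.1.unpair.2) τ) →
        Good n n.unpair.1.unpair.1 (e n.unpair.1.unpair.2) σ := by
    intro n
    by_cases hex : ∃ τ, Good n n.unpair.1.unpair.1 (e n.unpair.1.unpair.2) τ
    · exact ⟨hex.choose, fun _ => hex.choose_spec⟩
    · exact ⟨1, fun h => (hex h).elim⟩
  choose σ hσ using hchoose
  refine ⟨rayGraph σ, rayGraph_connected σ, rayGraph_degree σ, ?_⟩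
  rintro K f ⟨hfib, hdist⟩
  obtain ⟨j, hj⟩ := he (f 0)
  obtain ⟨N, hN⟩ := exists_pow_lt_factorial (B K ^ 5 * K)
  obtain ⟨n, hnN, hn1, hn2⟩ : ∃ n : ℕ, N ≤ n ∧ n.unpair.1.unpair.1 = K ∧
      n.unpair.1.unpair.2 = j :=
    ⟨Nat.pair (Nat.pair K j) N, Nat.right_le_pair _ _, by simp, by simp⟩
  have hgood := hσ n
  rw [hn1, hn2, hj] at hgood
  obtain ⟨i, hi⟩ := hgood
    (exists_obstructing_perm (fun v w => Γ.dist v w ≤ K) (B K) K (2 ^ n) (hB K)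
      (hN _ (hnN.trans Nat.lt_two_pow_self.le)) (f 0))
    f rfl (fun k => hdist _ _ (rayGraph_adj_succ σ k)) hfib
  exact hi (hdist _ _ (rayGraph_adj_matched σ n i))
end

section
/- Let Γ₁, Γ₂, … be a sequence of connected graphs, each of bounded degree (for each i there is D_i such that every vertex of Γ_i has at most D_i neighbors). Then there exists a single connected graph Δ on a countably infinite vertex set, with every vertex of degree at most 3, such that for every index i and every constant K there is no map f from the vertex set of Δ to the vertex set of Γ_i satisfying both: (i) |f⁻¹(h)| ≤ K for every vertex h of Γ_i; and (ii) dist_{Γ_i}(f(v), f(w)) ≤ K for any two adjacent vertices v, w of Δ. -/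
/-!
The graph `Δ` is the ray `0 - 1 - 2 - ⋯` together with a matching: for each `k` the dyadic block
`[2 * 2 ^ k, 4 * 2 ^ k)` is split into two halves of length `n = 2 ^ k`, which are matched by a
permutation `σ k` of `Fin n`. Such a graph is connected of degree at most `3` for every choice of
the `σ k`; these are chosen to diagonalise against all triples `(i, K, h)` with `h` a vertex of
`Γ i`, the prescribed image of the vertex `0`. There are countably many triples, since a connected
graph of bounded degree is countable.

Fix a triple, and let `C` bound the cardinality of all balls of radius `K` in `Γ i`. Restricted to
`[0, 4 * n]`, a map `f` with `f 0 = h` moving by at most `K` along the ray is one of at most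
`C ^ (4 * n)` maps (`exists_walks`). If its fibers have at most `K` elements, then `f` is
compatible with at most `(C * K) ^ n` permutations of `Fin n` (`card_compatible_le`). Since
`C ^ (4 * n) * (C * K) ^ n < n !` for large `n`, in every large enough block some permutation is
compatible with no such `f` (`exists_good_perm`). Assigning to distinct triples distinct blocks,
each one large enough for its triple, yields `Δ`.
-/

/-- In a connected graph of bounded degree, balls of a given radius have uniformly bounded
cardinality. -/
lemma exists_ball_bound_s14 {V : Type*} (G : SimpleGraph V) (hc : G.Connected) (D : ℕ)
    (hD : ∀ v : V, {w : V | G.Adj v w}.Finite ∧ {w : V | G.Adj v w}.ncard ≤ D) (r : ℕ) :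
    ∃ C : ℕ, ∀ v : V, ∃ s : Finset V, s.card ≤ C ∧ ∀ w, G.dist v w ≤ r → w ∈ s := by
  classical
  induction r with
  | zero =>
    refine ⟨1, fun v => ⟨{v}, by simp, fun w hw => ?_⟩⟩
    have : v = w := hc.dist_eq_zero_iff.1 (by omega)
    simp [this]
  | succ r ih =>
    obtain ⟨C, hC⟩ := ih
    refine ⟨1 + D * C, fun v => ?_⟩
    choose s hs hs' using hC
    have hN : (hD v).1.toFinset.card ≤ D := by
      rw [← Set.ncard_eq_toFinset_card _ (hD v).1]; exact (hD v).2
    refine ⟨{v} ∪ (hD v).1.toFinset.biUnion s, ?_, fun w hw => ?_⟩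
    · refine (Finset.card_union_le _ _).trans ?_
      refine Nat.add_le_add (by simp) ?_
      refine (Finset.card_biUnion_le_card_mul _ _ C fun u _ => hs u).trans ?_
      exact Nat.mul_le_mul_right _ hN
    · obtain ⟨p, hp⟩ := hc.exists_walk_length_eq_dist v w
      cases p with
      | nil => simp
      | cons h q =>
        rename_i u
        have h1 : G.dist u w ≤ r := by
          have := SimpleGraph.dist_le q
          simp at hp
          omega
        simp only [Finset.mem_union, Finset.mem_biUnion, Set.Finite.mem_toFinset,
          Set.mem_ofPred_eq]
        exact Or.inr ⟨u, h, hs' u w h1⟩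

lemma countable_of_bounded {V : Type*} (G : SimpleGraph V) (hc : G.Connected) (D : ℕ)
    (hD : ∀ v : V, {w : V | G.Adj v w}.Finite ∧ {w : V | G.Adj v w}.ncard ≤ D) :
    Countable V := by
  obtain ⟨v⟩ := hc.nonempty
  rw [← Set.countable_univ_iff]
  refine Set.Countable.mono (s₂ := ⋃ r : ℕ, {w | G.dist v w ≤ r}) ?_ ?_
  · intro w _
    exact Set.mem_iUnion.2 ⟨G.dist v w, by simp⟩
  · refine Set.countable_iUnion fun r => ?_
    obtain ⟨C, hC⟩ := exists_ball_bound_s14 G hc D hD r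
    obtain ⟨s, -, hs⟩ := hC v
    exact s.countable_toSet.mono fun w hw => hs w hw

/-- Up to agreement on `[0, m]`, there are at most `C ^ m` maps starting at `h` whose steps stay
in the prescribed sets `s v` of cardinality at most `C`. -/
lemma exists_walks {V : Type*} (s : V → Finset V) (C : ℕ) (hs : ∀ v, (s v).card ≤ C) (h : V)
    (m : ℕ) : ∃ F : Finset (ℕ → V), F.card ≤ C ^ m ∧
      ∀ f : ℕ → V, f 0 = h → (∀ j, f (j + 1) ∈ s (f j)) → ∃ g ∈ F, ∀ j ≤ m, g j = f j := by
  classical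
  induction m with
  | zero =>
    refine ⟨{fun _ => h}, by simp, fun f h0 _ => ⟨_, Finset.mem_singleton_self _, ?_⟩⟩
    intro j hj
    obtain rfl : j = 0 := by omega
    exact h0.symm
  | succ m ih =>
    obtain ⟨F, hF, hF'⟩ := ih
    refine ⟨F.biUnion fun g => (s (g m)).image fun w => Function.update g (m + 1) w, ?_, ?_⟩
    · refine (Finset.card_biUnion_le_card_mul _ _ C fun g _ =>
        Finset.card_image_le.trans (hs _)).trans ?_
      rw [pow_succ]
      exact Nat.mul_le_mul_right _ hF
    · intro f h0 hf
      obtain ⟨g, hg, hgf⟩ := hF' f h0 hf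
      refine ⟨Function.update g (m + 1) (f (m + 1)), ?_, fun j hj => ?_⟩
      · refine Finset.mem_biUnion.2 ⟨g, hg, Finset.mem_image.2 ⟨_, ?_, rfl⟩⟩
        rw [hgf m le_rfl]
        exact hf m
      · by_cases hjm : j = m + 1
        · subst hjm; simp
        · rw [Function.update_of_ne hjm]
          exact hgf j (by omega)

/-- If `y` has fibers of size at most `K`, then each value `σ t` of a compatible permutation lies
in a set of size at most `C * K`. -/
lemma card_compatible_le {V : Type*} [DecidableEq V] (s : V → Finset V) (C K n : ℕ)
    (hs : ∀ v, (s v).card ≤ C) (x y : Fin n → V)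
    (hy : ∀ h, (Finset.univ.filter fun t => y t = h).card ≤ K) :
    (Finset.univ.filter fun σ : Equiv.Perm (Fin n) => ∀ t, y (σ t) ∈ s (x t)).card
      ≤ (C * K) ^ n := by
  classical
  calc _ ≤ (Fintype.piFinset fun t : Fin n =>
          (s (x t)).biUnion fun h => Finset.univ.filter fun u => y u = h).card := by
        refine Finset.card_le_card_of_injOn (fun σ t => σ t) ?_ ?_
        · intro σ hσ
          simp only [Finset.coe_filter, Finset.mem_univ, true_and, Set.mem_ofPred_eq] at hσ
          simpa using hσ
        · intro σ _ τ _ hστ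
          exact Equiv.ext fun t => congrFun hστ t
    _ ≤ (C * K) ^ n := by
        rw [Fintype.card_piFinset]
        refine (Finset.prod_le_pow_card _ _ (C * K) fun t _ => ?_).trans (by simp)
        refine (Finset.card_biUnion_le_card_mul _ _ K fun h _ => hy h).trans ?_
        exact Nat.mul_le_mul_right _ (hs _)

/-- For every large enough block, some permutation used as the matching of that block
excludes all maps `f` with `f 0 = h` and constant `K`. -/
lemma exists_good_perm {V : Type*} (G : SimpleGraph V) (hc : G.Connected) (D : ℕ)
    (hD : ∀ v : V, {w : V | G.Adj v w}.Finite ∧ {w : V | G.Adj v w}.ncard ≤ D) (K : ℕ) (h : V) :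
    ∃ N : ℕ, ∀ k ≥ N, ∃ σ : Equiv.Perm (Fin (2 ^ k)), ∀ f : ℕ → V, f 0 = h →
      (∀ v, {j : ℕ | f j = v}.Finite ∧ {j : ℕ | f j = v}.ncard ≤ K) →
      (∀ j, G.dist (f j) (f (j + 1)) ≤ K) →
      ∃ t : Fin (2 ^ k), ¬ G.dist (f (2 * 2 ^ k + t)) (f (3 * 2 ^ k + σ t)) ≤ K := by
  classical
  obtain ⟨C, hC⟩ := exists_ball_bound_s14 G hc D hD K
  choose s hs hs' using hC
  obtain ⟨N, hN⟩ : ∃ N : ℕ, ∀ n ≥ N, (C ^ 4 * (C * K)) ^ n < n.factorial := by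
    have := FloorSemiring.tendsto_pow_div_factorial_atTop ((C ^ 4 * (C * K) : ℕ) : ℝ)
    obtain ⟨N, hN⟩ := Filter.eventually_atTop.1 (this.eventually_lt_const one_pos)
    refine ⟨N, fun n hn => ?_⟩
    have h1 := hN n hn
    rw [div_lt_one (by positivity)] at h1
    exact_mod_cast h1
  refine ⟨N, fun k hk => ?_⟩
  have hn : N ≤ 2 ^ k := hk.trans Nat.lt_two_pow_self.le
  generalize 2 ^ k = n at hn ⊢
  obtain ⟨F, hF, hF'⟩ := exists_walks s C hs h (4 * n)
  -- The permutations compatible with some walk whose fibers on the second half are small.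
  let B : Finset (Equiv.Perm (Fin n)) :=
    (F.filter fun g => ∀ v, (Finset.univ.filter fun t : Fin n => g (3 * n + t) = v).card ≤ K).biUnion
      fun g => Finset.univ.filter fun σ => ∀ t : Fin n, g (3 * n + σ t) ∈ s (g (2 * n + t))
  have hB : B.card < (Finset.univ : Finset (Equiv.Perm (Fin n))).card := by
    rw [Finset.card_univ, Fintype.card_perm, Fintype.card_fin]
    refine lt_of_le_of_lt ?_ (hN n hn)
    refine (Finset.card_biUnion_le_card_mul _ _ ((C * K) ^ n) fun g hg => ?_).trans ?_
    · exact card_compatible_le s C K n hs (fun t => g (2 * n + t)) (fun t => g (3 * n + t))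
        (Finset.mem_filter.1 hg).2
    · rw [mul_pow (C ^ 4), ← pow_mul]
      exact Nat.mul_le_mul_right _ ((Finset.card_filter_le _ _).trans hF)
  obtain ⟨σ, -, hσ⟩ := Finset.exists_mem_notMem_of_card_lt_card hB
  refine ⟨σ, fun f h0 hfib hstep => ?_⟩
  by_contra! hcon
  obtain ⟨g, hg, hgf⟩ := hF' f h0 fun j => hs' _ _ (hstep j)
  refine hσ (Finset.mem_biUnion.2 ⟨g, Finset.mem_filter.2 ⟨hg, fun v => ?_⟩,
    Finset.mem_filter.2 ⟨Finset.mem_univ _, fun t => ?_⟩⟩)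
  · refine le_trans ?_ (hfib v).2
    rw [Set.ncard_eq_toFinset_card _ (hfib v).1]
    refine Finset.card_le_card_of_injOn (fun t : Fin n => 3 * n + (t : ℕ)) ?_ ?_
    · intro t ht
      have := t.2
      simp only [Finset.coe_filter, Finset.mem_univ, true_and, Set.mem_ofPred_eq] at ht
      rw [hgf _ (by omega)] at ht
      simpa using ht
    · intro t _ u _ htu
      exact Fin.ext (by simpa using htu)
  · have h1 := t.2
    have h2 := (σ t).2
    rw [hgf _ (by omega), hgf _ (by omega)]
    exact hs' _ _ (hcon t)

/-- `BlockRel σ v w`: for some `k`, the vertex `v` lies in the first half of the dyadic block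
`[2 * 2 ^ k, 4 * 2 ^ k)` and `w` is its partner in the second half under `σ k`. -/
def BlockRel (σ : ∀ k : ℕ, Equiv.Perm (Fin (2 ^ k))) (v w : ℕ) : Prop :=
  ∃ (k : ℕ) (t : Fin (2 ^ k)), v = 2 * 2 ^ k + t ∧ w = 3 * 2 ^ k + σ k t

lemma block_unique {v k l : ℕ} (h1 : 2 * 2 ^ k ≤ v) (h2 : v < 4 * 2 ^ k)
    (h3 : 2 * 2 ^ l ≤ v) (h4 : v < 4 * 2 ^ l) : k = l := by
  have h5 : k + 1 < l + 2 :=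
    (Nat.pow_lt_pow_iff_right (a := 2) (by norm_num)).1 (by rw [pow_succ, pow_add]; omega)
  have h6 : l + 1 < k + 2 :=
    (Nat.pow_lt_pow_iff_right (a := 2) (by norm_num)).1 (by rw [pow_succ, pow_add]; omega)
  omega

/-- The blocks carry a matching. -/
lemma blockRel_subsingleton (σ : ∀ k : ℕ, Equiv.Perm (Fin (2 ^ k))) (v : ℕ) :
    {w | BlockRel σ v w ∨ BlockRel σ w v}.Subsingleton := by
  rintro w hw w' hw'
  rcases hw with ⟨k, t, h1, h2⟩ | ⟨k, t, h1, h2⟩ <;>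
  rcases hw' with ⟨l, u, h3, h4⟩ | ⟨l, u, h3, h4⟩ <;>
  · have ht := t.2
    have hu := u.2
    have hst := (σ k t).2
    have hsu := (σ l u).2
    obtain rfl : k = l := block_unique (v := v) (by omega) (by omega) (by omega) (by omega)
    -- The two occurrences of `v` lie in the same half.
    have key : t = u ∨ σ k t = σ k u := by
      by_cases h : v < 3 * 2 ^ k
      · exact Or.inl (Fin.ext (by omega))
      · exact Or.inr (Fin.ext (by omega))
    rw [(σ k).injective.eq_iff, or_self] at key
    subst key
    omega

/-- The ray on `ℕ` with, in addition, the two halves of each dyadic block matched by `σ`. -/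
def matchedRay (σ : ∀ k : ℕ, Equiv.Perm (Fin (2 ^ k))) : SimpleGraph ℕ :=
  SimpleGraph.fromRel fun v w => w = v + 1 ∨ BlockRel σ v w

lemma matchedRay_adj_succ (σ : ∀ k : ℕ, Equiv.Perm (Fin (2 ^ k))) (v : ℕ) :
    (matchedRay σ).Adj v (v + 1) := by
  simp [matchedRay]

lemma matchedRay_adj_block (σ : ∀ k : ℕ, Equiv.Perm (Fin (2 ^ k))) (k : ℕ) (t : Fin (2 ^ k)) :
    (matchedRay σ).Adj (2 * 2 ^ k + t) (3 * 2 ^ k + σ k t) := by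
  have ht := t.2
  exact (SimpleGraph.fromRel_adj _ _ _).2 ⟨by omega, Or.inl (Or.inr ⟨k, t, rfl, rfl⟩)⟩

lemma matchedRay_connected (σ : ∀ k : ℕ, Equiv.Perm (Fin (2 ^ k))) :
    (matchedRay σ).Connected := by
  have h : ∀ v, (matchedRay σ).Reachable 0 v := by
    intro v
    induction v with
    | zero => exact SimpleGraph.Reachable.refl _
    | succ v ih => exact ih.trans (matchedRay_adj_succ σ v).reachable
  exact ⟨fun v w => (h v).symm.trans (h w)⟩

lemma matchedRay_degree (σ : ∀ k : ℕ, Equiv.Perm (Fin (2 ^ k))) (v : ℕ) :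
    {w : ℕ | (matchedRay σ).Adj v w}.Finite ∧ {w : ℕ | (matchedRay σ).Adj v w}.ncard ≤ 3 := by
  have hsub : {w : ℕ | (matchedRay σ).Adj v w} ⊆
      ({v + 1, v - 1} : Set ℕ) ∪ {w | BlockRel σ v w ∨ BlockRel σ w v} := by
    intro w hw
    rw [Set.mem_ofPred_eq] at hw
    obtain ⟨-, (h | h) | (h | h)⟩ := (SimpleGraph.fromRel_adj _ _ _).1 hw
    · exact Or.inl (Or.inl h)
    · exact Or.inr (Or.inl h)
    · exact Or.inl (Or.inr (by simp; omega))
    · exact Or.inr (Or.inr h)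
  have hS := blockRel_subsingleton σ v
  have hfin : (({v + 1, v - 1} : Set ℕ) ∪ {w | BlockRel σ v w ∨ BlockRel σ w v}).Finite :=
    (Set.toFinite _).union hS.finite
  refine ⟨hfin.subset hsub, (Set.ncard_le_ncard hsub hfin).trans ?_⟩
  refine (Set.ncard_union_le _ _).trans ?_
  have h1 : ({v + 1, v - 1} : Set ℕ).ncard ≤ 2 := (Set.ncard_insert_le _ _).trans (by simp)
  have := hS.finite.to_subtype
  have h2 := Set.ncard_le_one_iff_subsingleton.2 hS
  omega

/-- given a sequence `Γ₁, Γ₂, …` of connected graphs of bounded degree, there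
is a single connected graph `Δ` on a countably infinite vertex set (here `ℕ`) with all
degrees at most 3 such that for no index `i` and constant `K` is there a map `f` from the
vertices of `Δ` to those of `Γ_i` with
(i) every fiber of `f` of size at most `K`, and
(ii) `dist_{Γ_i}(f v, f w) ≤ K` whenever `v, w` are adjacent in `Δ`. -/
theorem stmt_14 {V : ℕ → Type*} (Γ : ∀ i, SimpleGraph (V i))
    (hconn : ∀ i, (Γ i).Connected)
    (hdeg : ∀ i, ∃ D : ℕ, ∀ v : V i,
      {w : V i | (Γ i).Adj v w}.Finite ∧ {w : V i | (Γ i).Adj v w}.ncard ≤ D) :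
    ∃ Δ : SimpleGraph ℕ, Δ.Connected ∧
      (∀ v : ℕ, {w : ℕ | Δ.Adj v w}.Finite ∧ {w : ℕ | Δ.Adj v w}.ncard ≤ 3) ∧
      ∀ (i : ℕ) (K : ℕ) (f : ℕ → V i),
        ¬ ((∀ h : V i, {v : ℕ | f v = h}.Finite ∧ {v : ℕ | f v = h}.ncard ≤ K) ∧
           (∀ v w : ℕ, Δ.Adj v w → (Γ i).dist (f v) (f w) ≤ K)) := by
  choose D hD using hdeg
  have hcount : ∀ i, Countable (V i) := fun i =>
    countable_of_bounded (Γ i) (hconn i) (D i) (hD i)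
  obtain ⟨e, he⟩ := exists_injective_nat (Σ i : ℕ, ℕ × V i)
  choose N hN using fun T : (Σ i : ℕ, ℕ × V i) =>
    exists_good_perm (Γ T.1) (hconn T.1) (D T.1) (hD T.1) T.2.1 T.2.2
  -- The triple `T` is given the block `Nat.pair (e T) (N T)`: injective in `T`, and at least `N T`.
  have hσ : ∀ k : ℕ, ∃ σ : Equiv.Perm (Fin (2 ^ k)), ∀ T : (Σ i : ℕ, ℕ × V i),
      k = Nat.pair (e T) (N T) → ∀ f : ℕ → V T.1, f 0 = T.2.2 →
      (∀ v, {j : ℕ | f j = v}.Finite ∧ {j : ℕ | f j = v}.ncard ≤ T.2.1) →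
      (∀ j, (Γ T.1).dist (f j) (f (j + 1)) ≤ T.2.1) →
      ∃ t : Fin (2 ^ k),
        ¬ (Γ T.1).dist (f (2 * 2 ^ k + t)) (f (3 * 2 ^ k + σ t)) ≤ T.2.1 := by
    intro k
    by_cases hk : ∃ T, k = Nat.pair (e T) (N T)
    · obtain ⟨T, hT⟩ := hk
      obtain ⟨σ, hσ⟩ := hN T k (hT ▸ Nat.right_le_pair _ _)
      refine ⟨σ, fun T' hT' => ?_⟩
      obtain rfl : T = T' := he (Nat.pair_eq_pair.1 (hT.symm.trans hT')).1
      exact hσ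
    · exact ⟨1, fun T hT => (hk ⟨T, hT⟩).elim⟩
  choose σ hσ using hσ
  refine ⟨matchedRay σ, matchedRay_connected σ, matchedRay_degree σ, ?_⟩
  rintro i K f ⟨hfib, hlip⟩
  obtain ⟨t, ht⟩ := hσ _ ⟨i, K, f 0⟩ rfl f rfl hfib
    fun j => hlip _ _ (matchedRay_adj_succ σ j)
  exact ht (hlip _ _ (matchedRay_adj_block σ _ t))
end
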